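/- arXiv:0902.4016 — 4 statements merged into one kernel-verified Lean document; each statement's English description precedes it below -/
import Mathlib

section
/- Let 𝒜 be an abelian category with enough injectives satisfying AB4*-n. Let {M_α} and {L_α} be families of bounded below complexes of injective objects, and φ_α : M_α → L_α morphisms such that H^i(φ_α) is an isomorphism for all i ≥ t and all α. Then H^i(∏ M_α) → H^i(∏ L_α) is an isomorphism for all i ≥ t + n + 1. -/
/-!
STATEMENT 5 (Lemma 4.4): Let `𝒜` be an abelian category with enough injectives satisfying
AB4*-n.  Let `{M_α}` and `{L_α}` be families of bounded below complexes of injective objects,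
and `φ_α : M_α → L_α` morphisms such that `H^i(φ_α)` is an isomorphism for all `i ≥ t` and
all `α`.  Then `H^i(∏ M_α) → H^i(∏ L_α)` is an isomorphism for all `i ≥ t + n + 1`.
-/

open CategoryTheory Limits

universe v u

/-- AB4*-`n`: the derived functors of product, computed via injective resolutions, vanish in
degrees `> n`. -/
def AB4StarMinus (C : Type u) [Category.{v} C] [Abelian C] [HasProducts.{0} C] (n : ℕ) : Prop :=
  ∀ (I : Type) (A : I → C) (R : ∀ i, InjectiveResolution (A i)) (q : ℕ), n < q →
    IsZero ((HomologicalComplex.homologyFunctor C (ComplexShape.up ℕ) q).obj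
      (∏ᶜ fun i => (R i).cocomplex))

/-!
The mapping cone of `∏ φ_α` is the product of the mapping cones `C_α` of the `φ_α`, and a mapping
cone is exact in all degrees `≥ t` exactly when the morphism is epi on `H^t` and iso on `H^i` for
`i > t`. Each `C_α` consists of injectives and is exact in degrees `≥ t`, so its part in degrees
`≥ t - 1` is an injective resolution of the kernel of its differential `d^{t-1}`. By AB4*-`n`
applied to these resolutions, `∏ C_α` is exact in degrees `≥ t + n`. Working with the cones makes
the spectral sequence of a product of complexes unnecessary.
-/

section MappingCone

open CochainComplex

variable {C : Type*} [Category* C] [Preadditive C] [HasBinaryBiproducts C]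

lemma mappingCone_map_f_fst {K₁ L₁ K₂ L₂ : CochainComplex C ℤ} (φ₁ : K₁ ⟶ L₁) (φ₂ : K₂ ⟶ L₂)
    (a : K₁ ⟶ K₂) (b : L₁ ⟶ L₂) (comm : φ₁ ≫ b = a ≫ φ₂) (i : ℤ) :
    (mappingCone.map φ₁ φ₂ a b comm).f i ≫ (mappingCone.fst φ₂).1.v i (i + 1) rfl =
      (mappingCone.fst φ₁).1.v i (i + 1) rfl ≫ a.f (i + 1) := by
  simp [mappingCone.ext_from_iff _ _ _ rfl, mappingCone.map]

lemma mappingCone_map_f_snd {K₁ L₁ K₂ L₂ : CochainComplex C ℤ} (φ₁ : K₁ ⟶ L₁) (φ₂ : K₂ ⟶ L₂)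
    (a : K₁ ⟶ K₂) (b : L₁ ⟶ L₂) (comm : φ₁ ≫ b = a ≫ φ₂) (i : ℤ) :
    (mappingCone.map φ₁ φ₂ a b comm).f i ≫ (mappingCone.snd φ₂).v i i (add_zero i) =
      (mappingCone.snd φ₁).v i i (add_zero i) ≫ b.f i := by
  simp [mappingCone.ext_from_iff _ _ _ rfl, mappingCone.map]

variable {I : Type*} {M L : I → CochainComplex C ℤ} {P Q : CochainComplex C ℤ}
  (Φ : P ⟶ Q) (φ : ∀ α, M α ⟶ L α) (p : ∀ α, P ⟶ M α) (q : ∀ α, Q ⟶ L α)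
  (comm : ∀ α, Φ ≫ q α = p α ≫ φ α)

/-- The degree `i` part of the mapping cone of `Φ` is the product of those of the mapping cones of
the `φ α`. Only `P` in degree `i + 1` and `Q` in degree `i` need to be products. -/
noncomputable def isLimitFanMkMappingConeMapF (i : ℤ)
    (hp : IsLimit (Fan.mk (P.X (i + 1)) fun α => (p α).f (i + 1)))
    (hq : IsLimit (Fan.mk (Q.X i) fun α => (q α).f i)) :
    IsLimit (Fan.mk ((mappingCone Φ).X i)
      fun α => (mappingCone.map Φ (φ α) (p α) (q α) (comm α)).f i) :=
  have hpfac {A : C} (f : ∀ α, A ⟶ (M α).X (i + 1)) (α : I) :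
      Fan.IsLimit.lift hp f ≫ (p α).f (i + 1) = f α := Fan.IsLimit.fac hp f α
  have hqfac {A : C} (f : ∀ α, A ⟶ (L α).X i) (α : I) :
      Fan.IsLimit.lift hq f ≫ (q α).f i = f α := Fan.IsLimit.fac hq f α
  Fan.IsLimit.mk _
    (fun s =>
      Fan.IsLimit.lift hp (fun α => s.proj α ≫ (mappingCone.fst (φ α)).1.v i (i + 1) rfl) ≫
          (mappingCone.inl Φ).v (i + 1) i (by lia) +
      Fan.IsLimit.lift hq (fun α => s.proj α ≫ (mappingCone.snd (φ α)).v i i (add_zero i)) ≫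
          (mappingCone.inr Φ).f i)
    (fun s α => by
      simp [mappingCone.ext_to_iff _ i _ rfl, mappingCone_map_f_fst, mappingCone_map_f_snd,
        hpfac, hqfac])
    (fun s m hm => by
      refine mappingCone.ext_to _ i _ rfl
        (Fan.IsLimit.hom_ext hp _ _ fun α => ?_) (Fan.IsLimit.hom_ext hq _ _ fun α => ?_)
      · simp [← hm, hpfac, mappingCone_map_f_fst]
      · simp [← hm, hqfac, mappingCone_map_f_snd])

/-- The mapping cone of a morphism between two products is the product of the mapping cones, for
arbitrary choices of the product cones. -/
noncomputable def isLimitFanMkMappingConeMap [HasLimitsOfShape (Discrete I) C]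
    (hp : IsLimit (Fan.mk P p)) (hq : IsLimit (Fan.mk Q q)) :
    IsLimit (Fan.mk (mappingCone Φ)
      fun α => mappingCone.map Φ (φ α) (p α) (q α) (comm α)) :=
  HomologicalComplex.isLimitOfEval _ _ fun i =>
    (isLimitMapConeFanMkEquiv (HomologicalComplex.eval C _ i) _ _).symm <|
      isLimitFanMkMappingConeMapF Φ φ p q comm i
        (isLimitFanMkObjOfIsLimit (HomologicalComplex.eval C _ (i + 1)) _ _ hp)
        (isLimitFanMkObjOfIsLimit (HomologicalComplex.eval C _ i) _ _ hq)

/-- The mapping cone of `∏ φ_α` is the product of the mapping cones of the `φ_α`. -/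
noncomputable def mappingConePiMapIso [HasLimitsOfShape (Discrete I) C] :
    mappingCone (Limits.Pi.map φ) ≅ ∏ᶜ fun α => mappingCone (φ α) :=
  (isLimitFanMkMappingConeMap (Limits.Pi.map φ) φ (Pi.π M) (Pi.π L) (by simp)
    (productIsProduct M) (productIsProduct L)).conePointUniqueUpToIso (productIsProduct _)

lemma injective_mappingCone_X {K L : CochainComplex C ℤ} (φ : K ⟶ L) (i : ℤ)
    [Injective (K.X (i + 1))] [Injective (L.X i)] :
    Injective ((mappingCone φ).X i) :=
  Injective.of_iso (HomologicalComplex.homotopyCofiber.XIsoBiprod φ i (i + 1) rfl).symm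
    inferInstance

end MappingCone

section Exactness

open CochainComplex HomologicalComplex

variable {C : Type*} [Category* C] [Abelian C]

lemma exactAt_mappingCone_iff {K L : CochainComplex C ℤ} (φ : K ⟶ L) (i j : ℤ)
    (hij : i + 1 = j) :
    (mappingCone φ).ExactAt i ↔ Epi (homologyMap φ i) ∧ Mono (homologyMap φ j) := by
  let H := HomotopyCategory.homologyFunctor C (.up ℤ) 0
  let factors := HomotopyCategory.homologyFunctorFactors C (.up ℤ)
  have hT := HomotopyCategory.mappingCone_triangleh_distinguished φ
  have arrowIso (k : ℤ) :
      Arrow.mk ((H.shift k).map (mappingCone.triangleh φ).mor₁) ≅ Arrow.mk (homologyMap φ k) :=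
    Arrow.isoMk ((factors k).app K) ((factors k).app L) ((factors k).hom.naturality φ).symm
  have epi_iff : Epi ((H.shift i).map (mappingCone.triangleh φ).mor₁) ↔ Epi (homologyMap φ i) :=
    (MorphismProperty.epimorphisms C).arrow_mk_iso_iff (arrowIso i)
  have mono_iff : Mono ((H.shift j).map (mappingCone.triangleh φ).mor₁) ↔
      Mono (homologyMap φ j) :=
    (MorphismProperty.monomorphisms C).arrow_mk_iso_iff (arrowIso j)
  rw [exactAt_iff_isZero_homology, ← epi_iff, ← mono_iff,
    H.homologySequence_epi_shift_map_mor₁_iff _ hT,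
    H.homologySequence_mono_shift_map_mor₁_iff _ hT _ _ hij]
  exact ((factors i).app (mappingCone φ)).isZero_iff.symm.trans
    (H.homologySequence_exact₃ _ hT i j hij).isZero_X₂_iff

lemma forall_exactAt_mappingCone_iff {K L : CochainComplex C ℤ} (φ : K ⟶ L) (t : ℤ) :
    (∀ i, t ≤ i → (mappingCone φ).ExactAt i) ↔
      Epi (homologyMap φ t) ∧ ∀ i, t < i → IsIso (homologyMap φ i) := by
  constructor
  · intro h
    have epi (i : ℤ) (hi : t ≤ i) := ((exactAt_mappingCone_iff φ i _ rfl).1 (h i hi)).1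
    refine ⟨epi t le_rfl, fun i hi => ?_⟩
    have := epi i hi.le
    have := ((exactAt_mappingCone_iff φ (i - 1) i (by lia)).1 (h (i - 1) (by lia))).2
    exact isIso_of_mono_of_epi _
  · rintro ⟨epi, iso⟩ i hi
    have := iso (i + 1) (by lia)
    refine (exactAt_mappingCone_iff φ i _ rfl).2 ⟨?_, inferInstance⟩
    obtain rfl | hi := hi.eq_or_lt
    · exact epi
    · have := iso i hi
      infer_instance

lemma quasiIsoAt_zero_fromSingle₀Equiv_symm_iff {Z : C} {K : CochainComplex C ℕ}
    (f : Z ⟶ K.X 0) (hf : f ≫ K.d 0 1 = 0) :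
    QuasiIsoAt ((fromSingle₀Equiv K Z).symm ⟨f, hf⟩) 0 ↔
      (ShortComplex.mk f _ hf).Exact ∧ Mono f := by
  rw [quasiIsoAt₀_iff, ShortComplex.quasiIso_iff_of_zeros _ rfl rfl (K.shape _ _ (by simp))]
  simp only [shortComplexFunctor'_map_τ₂, fromSingle₀Equiv_symm_apply_f_zero]
  rfl

/-- A complex of injectives that is exact in positive degrees, as an injective resolution of the
kernel of its first differential. -/
noncomputable def injectiveResolutionKernel (K : CochainComplex C ℕ)
    (hinj : ∀ k, Injective (K.X k)) (hex : ∀ k, K.ExactAt (k + 1)) :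
    InjectiveResolution (kernel (K.d 0 1)) where
  cocomplex := K
  injective := hinj
  ι := (fromSingle₀Equiv _ _).symm ⟨kernel.ι (K.d 0 1), kernel.condition _⟩
  quasiIso := ⟨fun k => by
    cases k with
    | zero =>
      exact (quasiIsoAt_zero_fromSingle₀Equiv_symm_iff _ _).2
        ⟨ShortComplex.exact_kernel _, inferInstance⟩
    | succ k => exact (quasiIsoAt_iff_exactAt _ _ (exactAt_succ_single_obj _ _)).2 (hex k)⟩

end Exactness

section Restriction

variable {ι ι' : Type*} {c : ComplexShape ι} {c' : ComplexShape ι'} (e : c.Embedding c')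
  [e.IsRelIff] {C : Type*} [Category* C] [HasZeroMorphisms C]

lemma exactAt_restriction_iff (K : HomologicalComplex C c') {j : ι}
    (hprev : e.f (c.prev j) = c'.prev (e.f j)) (hnext : e.f (c.next j) = c'.next (e.f j)) :
    (K.restriction e).ExactAt j ↔ K.ExactAt (e.f j) :=
  ShortComplex.exact_iff_of_iso
    (HomologicalComplex.restriction.sc'Iso K e _ j _ hprev rfl hnext rfl rfl)

instance preservesLimitsOfShape_restrictionFunctor (J : Type*) [Category* J]
    [HasLimitsOfShape J C] : PreservesLimitsOfShape J (e.restrictionFunctor C) :=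
  HomologicalComplex.preservesLimitsOfShape_of_eval _ fun i =>
    inferInstanceAs (PreservesLimitsOfShape J (HomologicalComplex.eval C c' (e.f i)))

lemma exactAt_restriction_embeddingUpIntGE_iff (K : CochainComplex C ℤ) (s : ℤ) (k : ℕ) :
    (K.restriction (ComplexShape.embeddingUpIntGE s)).ExactAt (k + 1) ↔
      K.ExactAt (s + (k + 1 : ℕ)) :=
  exactAt_restriction_iff _ _ (by simp; lia) (by simp; lia)

end Restriction

namespace AB4StarMinus

open HomologicalComplex

variable {C : Type u} [Category.{v} C] [Abelian C] [HasProducts.{0} C] {n : ℕ} {I : Type}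

lemma exactAt_pi_nat (hC : AB4StarMinus C n) (K : I → CochainComplex C ℕ)
    (hinj : ∀ α k, Injective ((K α).X k)) (hK : ∀ α k, (K α).ExactAt (k + 1))
    {k : ℕ} (hk : n < k) : (∏ᶜ K).ExactAt k :=
  (exactAt_iff_isZero_homology _ _).2 <|
    hC I _ (fun α => injectiveResolutionKernel (K α) (hinj α) (hK α)) k hk

lemma exactAt_pi_int (hC : AB4StarMinus C n) (K : I → CochainComplex C ℤ)
    (hinj : ∀ α k, Injective ((K α).X k)) {t : ℤ} (hK : ∀ α i, t ≤ i → (K α).ExactAt i)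
    {i : ℤ} (hi : t + n ≤ i) : (∏ᶜ K).ExactAt i := by
  let e := ComplexShape.embeddingUpIntGE (t - 1)
  obtain ⟨k, rfl⟩ : ∃ k : ℕ, t - 1 + (k + 1 : ℕ) = i := ⟨(i - t).toNat, by lia⟩
  rw [← exactAt_restriction_embeddingUpIntGE_iff]
  refine ExactAt.of_iso ?_ (PreservesProduct.iso (e.restrictionFunctor C) K).symm
  refine hC.exactAt_pi_nat _ (fun α k => hinj α _) (fun α k => ?_) (by lia)
  exact (exactAt_restriction_embeddingUpIntGE_iff _ _ _).2 (hK α _ (by lia))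

end AB4StarMinus

theorem homology_product_iso_of_truncation_iso_general
    {C : Type u} [Category.{v} C] [Abelian C] [HasProducts.{0} C]
    (n : ℕ) (hC : AB4StarMinus C n)
    {I : Type} (M L : I → CochainComplex C ℤ)
    (hMinj : ∀ α k, Injective ((M α).X k)) (hLinj : ∀ α k, Injective ((L α).X k))
    (φ : ∀ α, M α ⟶ L α) (t : ℤ)
    (hφ : ∀ α, Epi (HomologicalComplex.homologyMap (φ α) t) ∧
      ∀ i, t < i → IsIso (HomologicalComplex.homologyMap (φ α) i)) :
    Epi (HomologicalComplex.homologyMap (Limits.Pi.map φ : (∏ᶜ M) ⟶ ∏ᶜ L) (t + n)) ∧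
      ∀ i, t + n < i →
        IsIso (HomologicalComplex.homologyMap (Limits.Pi.map φ : (∏ᶜ M) ⟶ ∏ᶜ L) i) := by
  simp only [← forall_exactAt_mappingCone_iff] at hφ ⊢
  intro i hi
  have hinj (α : I) (k : ℤ) : Injective ((CochainComplex.mappingCone (φ α)).X k) :=
    have := hMinj α (k + 1)
    have := hLinj α k
    injective_mappingCone_X (φ α) k
  exact (hC.exactAt_pi_int _ hinj hφ hi).of_iso (mappingConePiMapIso φ).symm

theorem homology_product_iso_of_truncation_iso
    {C : Type u} [Category.{v} C] [Abelian C] [HasProducts.{0} C] [EnoughInjectives C]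
    (n : ℕ) (hC : AB4StarMinus C n)
    {I : Type} (M L : I → CochainComplex C ℤ)
    (hMinj : ∀ α k, Injective ((M α).X k)) (hLinj : ∀ α k, Injective ((L α).X k))
    (hMbb : ∀ α, ∃ a : ℤ, ∀ k < a, IsZero ((M α).X k))
    (hLbb : ∀ α, ∃ a : ℤ, ∀ k < a, IsZero ((L α).X k))
    (φ : ∀ α, M α ⟶ L α) (t : ℤ)
    (hφ : ∀ α (i : ℤ), t ≤ i → IsIso (HomologicalComplex.homologyMap (φ α) i)) :
    ∀ i : ℤ, t + n + 1 ≤ i → IsIso (HomologicalComplex.homologyMap (Limits.Pi.map φ : (∏ᶜ M) ⟶ ∏ᶜ L) i) := by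
  have hφ' (α : I) := And.intro (hφ α t le_rfl).epi_of_iso fun i hi => hφ α i (le_of_lt hi)
  exact (homology_product_iso_of_truncation_iso_general n hC M L hMinj hLinj φ t hφ').2
end

section
/- Let Y be a stack (or scheme) with a finite Zariski open cover Y = V₁ ∪ ⋯ ∪ V_r. For 1 ≤ k ≤ r let U_k be the disjoint union of all k-fold intersections V_{i₁} ∩ ⋯ ∩ V_{i_k} and j_k : U_k → Y the natural map. Assume each pushforward j_{k*} : QC(U_k) → QC(Y) is exact, and each QC(U_k) satisfies AB4*-n_k. Then QC(Y) satisfies AB4*-n for any n ≥ max_k (k + n_k). -/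
/-!
STATEMENT 10 (Lemma 3.2): Let `Y` be a stack (or scheme) with a finite Zariski open cover
`Y = V₁ ∪ ⋯ ∪ V_r`; for `1 ≤ k ≤ r` let `U_k` be the disjoint union of all `k`-fold
intersections and `j_k : U_k → Y` the natural map.  If each `j_{k*} : QC(U_k) → QC(Y)` is
exact and each `QC(U_k)` satisfies AB4*-n_k, then `QC(Y)` satisfies AB4*-n for any
`n ≥ max_k (k + n_k)`.

Since the categories of quasi-coherent sheaves on stacks are not available in Mathlib, this
is formalized faithfully at the categorical level: `A = QC(Y)`, `U k = QC(U_{k+1})`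
(for `k : Fin r`), `jstar k = j_{k+1,*}` (exact, with exact left adjoint `jpull k = j_{k+1}^*`,
as holds for such open covers), and the Čech resolution
`0 → F → C¹(F) → ⋯ → C^r(F) → 0` with `C^p(F) = j_{p*} j_p^* F` is part of the data.
-/

open CategoryTheory Limits

universe v u v' u'

/-!
Work in the abelian category of families `Discrete I ⥤ A`, where the derived functors of product
are the right derived functors `R^q` of `lim`. The family of Čech resolutions
`0 → F → C^1 → C^2 → ⋯` splits into short exact sequences `0 → Z^p → C^p → Z^(p+1) → 0` with
`Z^1 = F`. If `R^(q-p) C^(p+1) = 0` for all `p ≤ q`, shifting dimensions along these sequences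
reduces `R^q F = 0` to `R^0 Z^(q+1) = 0`, which holds since `R^0 = lim` is left exact and
`Z^(q+1) ⊆ C^(q+1)`; this replaces the spectral sequence. The vanishing on `C^(p+1)` comes from the
AB4* condition upstairs, because an exact functor preserving products and injective objects turns
a product of injective resolutions into a product of injective resolutions.
-/

section Extend

variable {C : Type u} [Category.{v} C] [HasZeroMorphisms C]
  {D : Type u'} [Category.{v'} D] [HasZeroMorphisms D] [HasZeroObject D]
  {ι ι' : Type*} {c : ComplexShape ι} {c' : ComplexShape ι'}

variable (F : C ⥤ D) [F.PreservesZeroMorphisms] (e : c.Embedding c') (K : HomologicalComplex C c)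

/-- `HomologicalComplex.extendXIso` for a complex `F(K)`, with target written as `F.obj (K.X i)`. -/
noncomputable def extendMapXIso {i : ι} {j : ι'} (h : e.f i = j) :
    (((F.mapHomologicalComplex c).obj K).extend e).X j ≅ F.obj (K.X i) :=
  ((F.mapHomologicalComplex c).obj K).extendXIso e h

lemma extend_mapHomologicalComplex_d_eq {i i' : ι} {j j' : ι'} (h : e.f i = j)
    (h' : e.f i' = j') :
    (((F.mapHomologicalComplex c).obj K).extend e).d j j' =
      (extendMapXIso F e K h).hom ≫ F.map (K.d i i') ≫ (extendMapXIso F e K h').inv :=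
  ((F.mapHomologicalComplex c).obj K).extend_d_eq e h h'

variable [HasZeroObject C]

open Classical in
/-- The degreewise isomorphisms of `mapExtendIso`. -/
noncomputable def mapExtendXIso (j : ι') :
    F.obj ((K.extend e).X j) ≅ (((F.mapHomologicalComplex c).obj K).extend e).X j :=
  if h : ∃ i, e.f i = j then
    F.mapIso (K.extendXIso e h.choose_spec) ≪≫ (extendMapXIso F e K h.choose_spec).symm
  else (F.map_isZero (K.isZero_extend_X e j (not_exists.1 h))).iso
    (HomologicalComplex.isZero_extend_X _ e j (not_exists.1 h))

lemma mapExtendXIso_eq {i : ι} {j : ι'} (h : e.f i = j) :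
    mapExtendXIso F e K j = F.mapIso (K.extendXIso e h) ≪≫ (extendMapXIso F e K h).symm := by
  have hj : ∃ i, e.f i = j := ⟨i, h⟩
  obtain rfl : hj.choose = i := e.injective_f (hj.choose_spec.trans h.symm)
  exact dif_pos hj

lemma mapExtendXIso_hom_comp_d (j j' : ι') :
    (mapExtendXIso F e K j).hom ≫ (((F.mapHomologicalComplex c).obj K).extend e).d j j' =
      F.map ((K.extend e).d j j') ≫ (mapExtendXIso F e K j').hom := by
  by_cases hj : ∃ i, e.f i = j
  · by_cases hj' : ∃ i, e.f i = j'
    · obtain ⟨i, hi⟩ := hj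
      obtain ⟨i', hi'⟩ := hj'
      rw [mapExtendXIso_eq F e K hi, mapExtendXIso_eq F e K hi',
        extend_mapHomologicalComplex_d_eq F e K hi hi', K.extend_d_eq e hi hi']
      simp
    · exact (HomologicalComplex.isZero_extend_X _ e j' (not_exists.1 hj')).eq_of_tgt _ _
  · exact (F.map_isZero (K.isZero_extend_X e j (not_exists.1 hj))).eq_of_src _ _

/-- Extending a complex by zero along an embedding of complex shapes commutes with applying a
functor that preserves zero morphisms. -/
noncomputable def mapExtendIso :
    (F.mapHomologicalComplex c').obj (K.extend e) ≅
      ((F.mapHomologicalComplex c).obj K).extend e :=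
  HomologicalComplex.Hom.isoOfComponents (mapExtendXIso F e K)
    fun j j' _ => mapExtendXIso_hom_comp_d F e K j j'

end Extend

section RightDerived

open Pretriangulated

attribute [local instance] HasDerivedCategory.standard

variable {C : Type u} [Category.{v} C] [Abelian C] {D : Type u'} [Category.{v'} D] [Abelian D]

lemma nonempty_quotient_iso_of_isKInjective {I J : CochainComplex C ℤ} [I.IsKInjective]
    [J.IsKInjective] (e : DerivedCategory.Q.obj I ≅ DerivedCategory.Q.obj J) :
    Nonempty ((HomotopyCategory.quotient C (.up ℤ)).obj I ≅
      (HomotopyCategory.quotient C (.up ℤ)).obj J) := by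
  have bijective (I J : CochainComplex C ℤ) [J.IsKInjective] :=
    CochainComplex.IsKInjective.Qh_map_bijective ((HomotopyCategory.quotient C (.up ℤ)).obj I) J
  obtain ⟨f, hf⟩ := (bijective I J).2 e.hom
  obtain ⟨g, hg⟩ := (bijective J I).2 e.inv
  refine ⟨⟨f, g, (bijective I I).1 ?_, (bijective J J).1 ?_⟩⟩
  · rw [Functor.map_comp, hf, hg]
    exact e.hom_inv_id.trans (DerivedCategory.Qh.map_id _).symm
  · rw [Functor.map_comp, hf, hg]
    exact e.inv_hom_id.trans (DerivedCategory.Qh.map_id _).symm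

lemma isZero_shift_homologyFunctor_quotient_iff (K : CochainComplex C ℤ) (q : ℤ) :
    IsZero (((HomotopyCategory.homologyFunctor C (.up ℤ) 0).shift q).obj
      ((HomotopyCategory.quotient C (.up ℤ)).obj K)) ↔ K.ExactAt q := by
  rw [HomologicalComplex.exactAt_iff_isZero_homology]
  exact ((HomotopyCategory.homologyFunctorFactors C (.up ℤ) q).app K).isZero_iff

lemma exactAt_mapHomologicalComplex_iff_of_isKInjective (F : C ⥤ D) [F.Additive]
    {I J : CochainComplex C ℤ} [I.IsKInjective] [J.IsKInjective]
    (e : DerivedCategory.Q.obj I ≅ DerivedCategory.Q.obj J) (q : ℤ) :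
    ((F.mapHomologicalComplex (.up ℤ)).obj I).ExactAt q ↔
      ((F.mapHomologicalComplex (.up ℤ)).obj J).ExactAt q := by
  obtain ⟨f⟩ := nonempty_quotient_iso_of_isKInjective e
  rw [← isZero_shift_homologyFunctor_quotient_iff, ← isZero_shift_homologyFunctor_quotient_iff]
  exact (((HomotopyCategory.homologyFunctor D (.up ℤ) 0).shift q).mapIso
    ((F.mapHomotopyCategory (.up ℤ)).mapIso f)).isZero_iff

/-- A K-injective complex `I` which is isomorphic to the object `X`, placed in degree `0`, in the
derived category. These are more flexible than injective resolutions in that they are stable under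
cones. -/
structure IsKInjectiveResolution (I : CochainComplex C ℤ) (X : C) : Prop where
  isKInjective : I.IsKInjective
  nonempty_iso : Nonempty (DerivedCategory.Q.obj I ≅ (DerivedCategory.singleFunctor C 0).obj X)

lemma isKInjectiveResolution_cochainComplex {X : C} (R : InjectiveResolution X) :
    IsKInjectiveResolution R.cochainComplex X where
  isKInjective := CochainComplex.isKInjective_of_injective _ 0
  nonempty_iso := ⟨(asIso (DerivedCategory.Q.map R.ι')).symm ≪≫
    ((DerivedCategory.singleFunctorIsoCompQ C 0).app X).symm⟩

variable [HasInjectiveResolutions C] (F : C ⥤ D) [F.Additive]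

lemma isZero_rightDerived_obj_iff_exactAt {X : C} (R : InjectiveResolution X) (q : ℕ) :
    IsZero ((F.rightDerived q).obj X) ↔
      ((F.mapHomologicalComplex (.up ℕ)).obj R.cocomplex).ExactAt q := by
  rw [HomologicalComplex.exactAt_iff_isZero_homology]
  exact (R.isoRightDerivedObj F q).isZero_iff

lemma isZero_rightDerived_obj_of_isZero {X : C} (hX : IsZero X) (q : ℕ) :
    IsZero ((F.rightDerived q).obj X) := by
  have := hX.injective
  exact (Functor.map_isZero _ (Functor.map_isZero _
    ((CochainComplex.single₀ C).map_isZero hX))).of_iso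
      ((InjectiveResolution.self X).isoRightDerivedObj F q)

lemma IsKInjectiveResolution.isZero_rightDerived_obj_iff_exactAt {I : CochainComplex C ℤ} {X : C}
    (hI : IsKInjectiveResolution I X) (q : ℕ) :
    IsZero ((F.rightDerived q).obj X) ↔
      ((F.mapHomologicalComplex (.up ℤ)).obj I).ExactAt q := by
  let R := injectiveResolution X
  obtain ⟨_, ⟨e⟩⟩ := hI
  obtain ⟨_, ⟨e'⟩⟩ := isKInjectiveResolution_cochainComplex R
  rw [_root_.isZero_rightDerived_obj_iff_exactAt F R,
    exactAt_mapHomologicalComplex_iff_of_isKInjective F (e ≪≫ e'.symm),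
    ← HomologicalComplex.extend_exactAt_iff _ ComplexShape.embeddingUpNat (j' := (q : ℤ)) rfl]
  exact ⟨fun h => h.of_iso (mapExtendIso F _ R.cocomplex).symm,
    fun h => h.of_iso (mapExtendIso F _ R.cocomplex)⟩

lemma exists_distinguished_isKInjectiveResolution {S : ShortComplex C} (hS : S.ShortExact) :
    ∃ (I₁ I₂ I₃ : CochainComplex C ℤ) (f : (HomotopyCategory.quotient C (.up ℤ)).obj I₁ ⟶
        (HomotopyCategory.quotient C (.up ℤ)).obj I₂)
      (g : (HomotopyCategory.quotient C (.up ℤ)).obj I₂ ⟶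
        (HomotopyCategory.quotient C (.up ℤ)).obj I₃)
      (h : (HomotopyCategory.quotient C (.up ℤ)).obj I₃ ⟶
        ((HomotopyCategory.quotient C (.up ℤ)).obj I₁)⟦(1 : ℤ)⟧),
      Triangle.mk f g h ∈ distTriang (HomotopyCategory C (.up ℤ)) ∧
      IsKInjectiveResolution I₁ S.X₁ ∧ IsKInjectiveResolution I₂ S.X₂ ∧
      IsKInjectiveResolution I₃ S.X₃ := by
  have hI₁ := isKInjectiveResolution_cochainComplex (injectiveResolution S.X₁)
  have hI₂ := isKInjectiveResolution_cochainComplex (injectiveResolution S.X₂)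
  have := hI₁.isKInjective
  have := hI₂.isKInjective
  obtain ⟨e₁⟩ := hI₁.nonempty_iso
  obtain ⟨e₂⟩ := hI₂.nonempty_iso
  obtain ⟨f, hf⟩ := (CochainComplex.IsKInjective.Qh_map_bijective
    ((HomotopyCategory.quotient C (.up ℤ)).obj (injectiveResolution S.X₁).cochainComplex)
      (injectiveResolution S.X₂).cochainComplex).2
      (e₁.hom ≫ (DerivedCategory.singleFunctor C 0).map S.f ≫ e₂.inv)
  obtain ⟨Z, g, h, hT⟩ := distinguished_cocone_triangle f
  obtain ⟨I₃, rfl⟩ := HomotopyCategory.quotient_obj_surjective Z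
  have isKInjective₃ : CochainComplex.IsKInjective I₃ := by
    rw [CochainComplex.isKInjective_iff_rightOrthogonal]
    exact ObjectProperty.ext_of_isTriangulatedClosed₃ _ _ hT
      (CochainComplex.IsKInjective.rightOrthogonal _)
      (CochainComplex.IsKInjective.rightOrthogonal _)
  have comm : DerivedCategory.Qh.map f ≫ e₂.hom =
      e₁.hom ≫ (DerivedCategory.singleFunctor C 0).map S.f :=
    (Iso.eq_comp_inv e₂).1 (hf.trans (Category.assoc _ _ _).symm)
  let e := isoTriangleOfIso₁₂ _ _ (DerivedCategory.Qh.map_distinguished _ hT)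
    hS.singleTriangle_distinguished e₁ e₂ comm
  exact ⟨_, _, _, f, g, h, hT, hI₁, hI₂, isKInjective₃, ⟨Triangle.π₃.mapIso e⟩⟩

lemma isZero_rightDerived_obj_of_shortExact {S : ShortComplex C} (hS : S.ShortExact) {q : ℕ}
    (h₂ : IsZero ((F.rightDerived (q + 1)).obj S.X₂))
    (h₃ : IsZero ((F.rightDerived q).obj S.X₃)) :
    IsZero ((F.rightDerived (q + 1)).obj S.X₁) := by
  obtain ⟨I₁, I₂, I₃, f, g, h, hT, hI₁, hI₂, hI₃⟩ :=
    exists_distinguished_isKInjectiveResolution hS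
  rw [hI₂.isZero_rightDerived_obj_iff_exactAt F,
    ← isZero_shift_homologyFunctor_quotient_iff] at h₂
  rw [hI₃.isZero_rightDerived_obj_iff_exactAt F,
    ← isZero_shift_homologyFunctor_quotient_iff] at h₃
  rw [hI₁.isZero_rightDerived_obj_iff_exactAt F, ← isZero_shift_homologyFunctor_quotient_iff]
  have exact₁ := (HomotopyCategory.homologyFunctor D (.up ℤ) 0).homologySequence_exact₁ _
    ((F.mapHomotopyCategory (.up ℤ)).map_distinguished _ hT) q ((q + 1 : ℕ) : ℤ) (by simp)
  exact exact₁.isZero_X₂ (h₃.eq_of_src _ _) (h₂.eq_of_tgt _ _)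

end RightDerived

section Cycles

variable {C : Type u} [Category.{v} C] [Abelian C]

/-- The short complex `Zᵖ → Kᵖ → Zᵖ⁺¹` given by the inclusion of cycles and the differential of a
cochain complex `K`. -/
noncomputable def cyclesShortComplex (K : CochainComplex C ℕ) (p : ℕ) : ShortComplex C :=
  ShortComplex.mk (K.iCycles p) (K.toCycles p (p + 1)) (by
    rw [← cancel_mono (K.iCycles _), Category.assoc, K.toCycles_i, K.iCycles_d, zero_comp])

lemma epi_toCycles_of_exactAt {K : CochainComplex C ℕ} {p : ℕ} (h : K.ExactAt (p + 1)) :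
    Epi (K.toCycles p (p + 1)) := by
  rw [HomologicalComplex.exactAt_iff' _ p (p + 1) (p + 2) (by simp) (by simp)] at h
  rw [(Iso.eq_comp_inv _).2 (K.toCycles_cyclesIsoSc'_hom p (p + 1) (p + 2) (by simp) (by simp))]
  exact epi_comp' h.epi_toCycles inferInstance

lemma shortExact_cyclesShortComplex {K : CochainComplex C ℕ} {p : ℕ} (h : K.ExactAt (p + 1)) :
    (cyclesShortComplex K p).ShortExact where
  mono_f := inferInstanceAs (Mono (K.iCycles p))
  epi_g := epi_toCycles_of_exactAt h
  exact := by
    refine ShortComplex.exact_of_f_is_kernel _ ?_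
    exact isKernelOfComp _ _ (K.cyclesIsKernel p (p + 1) (by simp)) _ (K.toCycles_i _ _)

lemma isIso_toCycles_zero_one {K : CochainComplex C ℕ} (h₀ : K.ExactAt 0) (h₁ : K.ExactAt 1) :
    IsIso (K.toCycles 0 1) := by
  have := epi_toCycles_of_exactAt h₁
  have : Mono (K.d 0 1) :=
    ((HomologicalComplex.exactAt_iff' _ 0 0 1 (by simp) (by simp)).1 h₀).mono_g
      (K.shape _ _ (by simp))
  have : Mono (K.toCycles 0 1 ≫ K.iCycles 1) := by rwa [K.toCycles_i]
  have := mono_of_mono (K.toCycles 0 1) (K.iCycles 1)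
  exact isIso_of_mono_of_epi _

end Cycles

section Acyclicity

variable {C : Type u} [Category.{v} C] [Abelian C] {D : Type u'} [Category.{v'} D] [Abelian D]
  [EnoughInjectives C] (F : C ⥤ D) [F.Additive] [PreservesFiniteLimits F]

lemma isZero_rightDerived_zero_obj_of_mono {X Y : C} (f : X ⟶ Y) [Mono f]
    (hY : IsZero ((F.rightDerived 0).obj Y)) : IsZero ((F.rightDerived 0).obj X) :=
  (IsZero.of_mono (F.map f) (hY.of_iso (F.rightDerivedZeroIsoSelf.app Y).symm)).of_iso
    (F.rightDerivedZeroIsoSelf.app X)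

lemma isZero_rightDerived_obj_cycles {K : CochainComplex C ℕ} (q : ℕ) {p : ℕ}
    (exact : ∀ i, p < i → K.ExactAt i)
    (hK : ∀ i ≤ q, IsZero ((F.rightDerived (q - i)).obj (K.X (p + i)))) :
    IsZero ((F.rightDerived q).obj (K.cycles p)) := by
  induction q generalizing p with
  | zero => exact isZero_rightDerived_zero_obj_of_mono F (K.iCycles p) (hK 0 le_rfl)
  | succ q ih =>
    refine isZero_rightDerived_obj_of_shortExact F
      (shortExact_cyclesShortComplex (exact (p + 1) (by omega))) (hK 0 (by omega)) ?_
    refine ih (fun i hi => exact i (by omega)) fun i hi => ?_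
    have := hK (i + 1) (by omega)
    rwa [Nat.add_sub_add_right, Nat.add_comm i 1, ← Nat.add_assoc] at this

lemma isZero_rightDerived_obj_of_exactAt {K : CochainComplex C ℕ} (exact : ∀ i, K.ExactAt i)
    {q : ℕ} (hK : ∀ p ≤ q, IsZero ((F.rightDerived (q - p)).obj (K.X (p + 1)))) :
    IsZero ((F.rightDerived q).obj (K.X 0)) := by
  have := isIso_toCycles_zero_one (exact 0) (exact 1)
  refine IsZero.of_iso (isZero_rightDerived_obj_cycles F q (fun i _ => exact i) fun p hp => ?_)
    ((F.rightDerived q).mapIso (asIso (K.toCycles 0 1)))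
  rw [Nat.add_comm 1 p]
  exact hK p hp

end Acyclicity

lemma singleMapHomologicalComplex_inv_comp_map_fromSingle₀Equiv_symm
    {C : Type u} [Category.{v} C] [HasZeroMorphisms C] [HasZeroObject C]
    {D : Type u'} [Category.{v'} D] [HasZeroMorphisms D] [HasZeroObject D]
    (F : C ⥤ D) [F.PreservesZeroMorphisms] {X : C} {K : CochainComplex C ℕ} (f : X ⟶ K.X 0)
    (hf : f ≫ K.d 0 1 = 0) (hf' : F.map f ≫ F.map (K.d 0 1) = 0) :
    (HomologicalComplex.singleMapHomologicalComplex F (.up ℕ) 0).inv.app X ≫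
      (F.mapHomologicalComplex (.up ℕ)).map ((CochainComplex.fromSingle₀Equiv K X).symm ⟨f, hf⟩) =
    (CochainComplex.fromSingle₀Equiv ((F.mapHomologicalComplex (.up ℕ)).obj K) (F.obj X)).symm
      ⟨F.map f, hf'⟩ := by
  have inv_f_zero : ((HomologicalComplex.singleMapHomologicalComplex F (.up ℕ) 0).inv.app X).f 0 =
      𝟙 (F.obj X) :=
    (HomologicalComplex.singleMapHomologicalComplex_inv_app_self F (.up ℕ) 0 X).trans
      ((Category.id_comp _).trans (F.map_id X))
  refine HomologicalComplex.from_single_hom_ext ?_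
  refine (congrArg₂ (fun (a : F.obj X ⟶ F.obj X) (b : F.obj X ⟶ F.obj (K.X 0)) => a ≫ b) inv_f_zero
    (congrArg F.map (CochainComplex.fromSingle₀Equiv_symm_apply_f_zero f hf))).trans ?_
  exact (Category.id_comp _).trans
    (CochainComplex.fromSingle₀Equiv_symm_apply_f_zero
      (C := (F.mapHomologicalComplex (.up ℕ)).obj K) (F.map f) hf').symm

section Families

variable {C : Type u} [Category.{v} C] {I : Type*}

/-- A family of complexes, regarded as a complex of families of objects. -/
def familyComplex [HasZeroMorphisms C] {ι : Type*} {c : ComplexShape ι}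
    (K : I → HomologicalComplex C c) : HomologicalComplex (Discrete I ⥤ C) c where
  X n := Discrete.functor fun i => (K i).X n
  d m n := Discrete.natTrans fun i => (K i.as).d m n
  shape m n h := by
    ext ⟨i⟩
    exact (K i).shape m n h
  d_comp_d' m n p _ _ := by
    ext ⟨i⟩
    exact (K i).d_comp_d m n p

instance additive_lim {J : Type*} [Category* J] [Preadditive C] [HasLimitsOfShape J C] :
    (lim : (J ⥤ C) ⥤ C).Additive where
  map_add {X Y f g} := by
    refine limit.hom_ext fun j => ?_
    simp

lemma preservesProductIso_inv_comp_app {E D : Type*} [Category* E] [Category* D] {F G : E ⥤ D}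
    (α : F ⟶ G) (K : I → E) [HasProduct K] [HasProduct fun i => F.obj (K i)]
    [HasProduct fun i => G.obj (K i)] [PreservesLimit (Discrete.functor K) F]
    [PreservesLimit (Discrete.functor K) G] :
    (PreservesProduct.iso F K).inv ≫ α.app (∏ᶜ K) =
      Limits.Pi.map (fun i => α.app (K i)) ≫ (PreservesProduct.iso G K).inv := by
  rw [Iso.inv_comp_eq, ← Category.assoc, Iso.eq_comp_inv]
  refine Limits.Pi.hom_ext _ _ fun i => ?_
  simp

variable [Abelian C]

instance injective_discreteFunctor (J : I → C) [∀ i, Injective (J i)] :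
    Injective (Discrete.functor J) where
  factors g f _ :=
    ⟨Discrete.natTrans fun i => Injective.factorThru (J := J i.as) (g.app i) (f.app i), by
      ext i
      exact Injective.comp_factorThru (J := J i.as) (g.app i) (f.app i)⟩

instance enoughInjectives_discreteFunctor [EnoughInjectives C] :
    EnoughInjectives (Discrete I ⥤ C) where
  presentation X := ⟨{
    J := Discrete.functor fun i => Injective.under (X.obj ⟨i⟩)
    f := Discrete.natTrans fun i => Injective.ι (X.obj i)
    mono := by
      have (i : Discrete I) : Mono ((Discrete.natTrans fun i => Injective.ι (X.obj i) :
        X ⟶ Discrete.functor fun i => Injective.under (X.obj ⟨i⟩)).app i) :=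
        inferInstanceAs (Mono (Injective.ι (X.obj i)))
      exact NatTrans.mono_of_mono_app _ }⟩

lemma exactAt_familyComplex {ι : Type*} {c : ComplexShape ι} {K : I → HomologicalComplex C c}
    {n : ι} (h : ∀ i, (K i).ExactAt n) :
    (familyComplex K).ExactAt n := by
  rw [HomologicalComplex.ExactAt, ShortComplex.exact_iff_isZero_homology, Functor.isZero_iff]
  rintro ⟨i⟩
  refine IsZero.of_iso ?_
    (((familyComplex K).sc n).mapHomologyIso ((evaluation _ C).obj ⟨i⟩)).symm
  exact (ShortComplex.exact_iff_isZero_homology _).1 (h i)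

lemma familyComplex_ι_comp_d {X : I → C} (R : ∀ i, InjectiveResolution (X i)) :
    (Discrete.natTrans fun i => (R i.as).ι.f 0 :
        Discrete.functor X ⟶ (familyComplex fun i => (R i).cocomplex).X 0) ≫
      (familyComplex fun i => (R i).cocomplex).d 0 1 = 0 := by
  ext ⟨i⟩
  exact (R i).ι_f_zero_comp_complex_d

lemma quasiIso_fromSingle₀Equiv_symm {X : C} (R : InjectiveResolution X) :
    QuasiIso ((CochainComplex.fromSingle₀Equiv R.cocomplex X).symm
      ⟨R.ι.f 0, R.ι_f_zero_comp_complex_d⟩) := by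
  convert R.quasiIso
  exact (CochainComplex.fromSingle₀Equiv R.cocomplex X).symm_apply_apply R.ι

/-- Injective resolutions of the members of a family form an injective resolution of the family. -/
noncomputable def familyInjectiveResolution {X : I → C} (R : ∀ i, InjectiveResolution (X i)) :
    InjectiveResolution (Discrete.functor X) where
  cocomplex := familyComplex fun i => (R i).cocomplex
  injective n := injective_discreteFunctor fun i => (R i).cocomplex.X n
  ι := (CochainComplex.fromSingle₀Equiv _ _).symm ⟨_, familyComplex_ι_comp_d R⟩
  quasiIso := by
    rw [HomologicalComplex.quasiIso_iff_evaluation]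
    rintro ⟨i⟩
    let F := (evaluation _ C).obj (Discrete.mk i)
    have map_ι := singleMapHomologicalComplex_inv_comp_map_fromSingle₀Equiv_symm F
      (K := familyComplex fun i => (R i).cocomplex) (X := Discrete.functor X)
      (Discrete.natTrans fun i => (R i.as).ι.f 0) (familyComplex_ι_comp_d R)
      (R i).ι_f_zero_comp_complex_d
    refine (quasiIso_iff_comp_left ((HomologicalComplex.singleMapHomologicalComplex F
      (.up ℕ) 0).inv.app (Discrete.functor X)) _).1 ?_
    rw [map_ι]
    exact quasiIso_fromSingle₀Equiv_symm (R i)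

/-- The image of an injective resolution under an exact functor which preserves injective
objects. -/
noncomputable def mapInjectiveResolution {X : C} (R : InjectiveResolution X)
    {D : Type u'} [Category.{v'} D] [Abelian D] (F : C ⥤ D) [F.Additive]
    [PreservesFiniteLimits F] [PreservesFiniteColimits F] [F.PreservesInjectiveObjects] :
    InjectiveResolution (F.obj X) where
  cocomplex := (F.mapHomologicalComplex _).obj R.cocomplex
  injective _ := F.injective_obj _
  ι := ((HomologicalComplex.singleMapHomologicalComplex F (.up ℕ) 0).app X).inv ≫
    (F.mapHomologicalComplex _).map R.ι
  quasiIso := inferInstance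

/-- Products of complexes are computed degreewise. -/
noncomputable def limMapFamilyComplexIso [HasProductsOfShape I C] {ι : Type*}
    {c : ComplexShape ι} (K : I → HomologicalComplex C c) :
    (lim.mapHomologicalComplex c).obj (familyComplex K) ≅ ∏ᶜ K :=
  HomologicalComplex.Hom.isoOfComponents
    (fun n => (PreservesProduct.iso (HomologicalComplex.eval C c n) K).symm)
    (fun m n _ => preservesProductIso_inv_comp_app (F := HomologicalComplex.eval C c m)
      (G := HomologicalComplex.eval C c n)
      { app := fun K => K.d m n, naturality := fun _ _ f => f.comm m n } K)

variable [EnoughInjectives C] [HasProductsOfShape I C]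

lemma isZero_rightDerived_lim_obj_iff {X : I → C} (R : ∀ i, InjectiveResolution (X i)) (q : ℕ) :
    IsZero (((lim : (Discrete I ⥤ C) ⥤ C).rightDerived q).obj (Discrete.functor X)) ↔
      (∏ᶜ fun i => (R i).cocomplex).ExactAt q := by
  rw [isZero_rightDerived_obj_iff_exactAt lim (familyInjectiveResolution R)]
  exact ⟨fun h => h.of_iso (limMapFamilyComplexIso _),
    fun h => h.of_iso (limMapFamilyComplexIso _).symm⟩

lemma isZero_rightDerived_lim_obj_map {D : Type u'} [Category.{v'} D] [Abelian D]
    [HasProductsOfShape I D] [EnoughInjectives D] (F : C ⥤ D)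
    [PreservesFiniteLimits F] [PreservesFiniteColimits F] [PreservesLimitsOfShape (Discrete I) F]
    [F.PreservesInjectiveObjects] {X : I → C} {q : ℕ}
    (h : IsZero (((lim : (Discrete I ⥤ C) ⥤ C).rightDerived q).obj (Discrete.functor X))) :
    IsZero (((lim : (Discrete I ⥤ D) ⥤ D).rightDerived q).obj
      (Discrete.functor fun i => F.obj (X i))) := by
  have : F.Additive := Functor.additive_of_preserves_binary_products F
  let R (i : I) := injectiveResolution (X i)
  rw [isZero_rightDerived_lim_obj_iff R] at h
  rw [isZero_rightDerived_lim_obj_iff fun i => mapInjectiveResolution (R i) F]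
  have hF : ((F.mapHomologicalComplex (.up ℕ)).obj (∏ᶜ fun i => (R i).cocomplex)).ExactAt q :=
    ShortComplex.Exact.map h F
  exact hF.of_iso (PreservesProduct.iso (F.mapHomologicalComplex (.up ℕ)) fun i => (R i).cocomplex)

end Families

lemma ab4StarMinus_iff {C : Type u} [Category.{v} C] [Abelian C] [HasProducts.{0} C]
    [EnoughInjectives C] (n : ℕ) : AB4StarMinus C n ↔ ∀ (I : Type) (X : I → C) (q : ℕ), n < q →
    IsZero (((lim : (Discrete I ⥤ C) ⥤ C).rightDerived q).obj (Discrete.functor X)) := by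
  refine ⟨fun h I X q hq => ?_, fun h I X R q hq => ?_⟩
  · rw [isZero_rightDerived_lim_obj_iff fun i => injectiveResolution (X i),
      HomologicalComplex.exactAt_iff_isZero_homology]
    exact h I X _ q hq
  · exact (HomologicalComplex.exactAt_iff_isZero_homology _ _).1
      ((isZero_rightDerived_lim_obj_iff R q).1 (h I X q hq))

lemma isZero_rightDerived_lim_obj_of_essImage {C : Type u} [Category.{v} C] [Abelian C]
    [HasProducts.{0} C] [EnoughInjectives C] {D : Type u'} [Category.{v'} D] [Abelian D]
    [HasProducts.{0} D] [EnoughInjectives D] (F : C ⥤ D) [PreservesFiniteLimits F]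
    [PreservesFiniteColimits F] [F.PreservesInjectiveObjects] {n : ℕ} (hC : AB4StarMinus C n)
    {I : Type} [PreservesLimitsOfShape (Discrete I) F] {Y : I → D} (hY : ∀ i, F.essImage (Y i))
    {q : ℕ} (hq : n < q) :
    IsZero (((lim : (Discrete I ⥤ D) ⥤ D).rightDerived q).obj (Discrete.functor Y)) := by
  choose X e using hY
  exact (isZero_rightDerived_lim_obj_map F ((ab4StarMinus_iff n).1 hC I X q hq)).of_iso
    ((lim.rightDerived q).mapIso (Discrete.natIso fun i => (e i.as).some.symm))

lemma ab4StarMinus_of_coresolution {A : Type u} [Category.{v} A] [Abelian A]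
    [HasProducts.{0} A] [EnoughInjectives A] (n : ℕ)
    (coresolution : ∀ (I : Type) (F : I → A), ∃ K : I → CochainComplex A ℕ,
      (∀ i p, (K i).ExactAt p) ∧ (∀ i, Nonempty ((K i).X 0 ≅ F i)) ∧
      ∀ p q, n < p + q → IsZero (((lim : (Discrete I ⥤ A) ⥤ A).rightDerived q).obj
        (Discrete.functor fun i => (K i).X (p + 1)))) :
    AB4StarMinus A n := by
  refine (ab4StarMinus_iff n).2 fun I F q hq => ?_
  obtain ⟨K, exact, e, acyclic⟩ := coresolution I F
  have isZero_X_zero : IsZero (((lim : (Discrete I ⥤ A) ⥤ A).rightDerived q).obj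
      ((familyComplex K).X 0)) :=
    isZero_rightDerived_obj_of_exactAt lim (fun p => exactAt_familyComplex fun i => exact i p)
      fun p hp => acyclic p (q - p) (by omega)
  exact isZero_X_zero.of_iso
    (((lim : (Discrete I ⥤ A) ⥤ A).rightDerived q).mapIso
      (Discrete.natIso fun i => (e i.as).some.symm))

theorem ab4StarMinus_of_cech_cover_general
    {A : Type u} [Category.{v} A] [Abelian A] [HasProducts.{0} A] [EnoughInjectives A]
    (r : ℕ) (U : Fin r → Type u') [∀ k, Category.{v'} (U k)] [∀ k, Abelian (U k)]
    [∀ k, HasProducts.{0} (U k)] [∀ k, EnoughInjectives (U k)] (jstar : ∀ k, U k ⥤ A)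
    [∀ k, PreservesFiniteLimits (jstar k)] [∀ k, PreservesFiniteColimits (jstar k)]
    [∀ k, (jstar k).PreservesInjectiveObjects]
    [∀ k (I : Type), PreservesLimitsOfShape (Discrete I) (jstar k)]
    (nk : Fin r → ℕ) (hU : ∀ k, AB4StarMinus (U k) (nk k))
    (cech : ∀ F : A, ∃ K : CochainComplex A ℕ,
      (∀ i, K.ExactAt i) ∧ Nonempty (K.X 0 ≅ F) ∧
      (∀ p : Fin r, (jstar p).essImage (K.X (p + 1))) ∧ ∀ p, r < p → IsZero (K.X p))
    (n : ℕ) (hn : ∀ k : Fin r, (k : ℕ) + nk k ≤ n) :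
    AB4StarMinus A n := by
  refine ab4StarMinus_of_coresolution n fun I F => ?_
  choose K exact e essImage isZero using fun i => cech (F i)
  refine ⟨K, exact, e, fun p q hpq => ?_⟩
  by_cases hp : p < r
  · have : p + nk ⟨p, hp⟩ ≤ n := hn ⟨p, hp⟩
    exact isZero_rightDerived_lim_obj_of_essImage (jstar ⟨p, hp⟩) (hU _)
      (fun i => essImage i ⟨p, hp⟩) (by omega)
  · exact isZero_rightDerived_obj_of_isZero _
      (Functor.isZero _ fun i => isZero i.as (p + 1) (by omega)) q

theorem ab4StarMinus_of_cech_cover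
    {A : Type u} [Category.{v} A] [Abelian A] [HasProducts.{0} A] [EnoughInjectives A]
    (r : ℕ) (U : Fin r → Type u') [∀ k, Category.{v'} (U k)] [∀ k, Abelian (U k)]
    [∀ k, HasProducts.{0} (U k)] [∀ k, EnoughInjectives (U k)]
    (jstar : ∀ k, U k ⥤ A) (jpull : ∀ k, A ⥤ U k)
    (adj : ∀ k, jpull k ⊣ jstar k)
    [∀ k, PreservesFiniteLimits (jpull k)] -- the left adjoints `j_k^*` are exact
    -- hypothesis (i): each `j_{k*}` is exact
    [∀ k, PreservesFiniteLimits (jstar k)] [∀ k, PreservesFiniteColimits (jstar k)]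
    -- hypothesis (ii): each `QC(U_k)` is AB4*-n_k
    (nk : Fin r → ℕ) (hU : ∀ k, AB4StarMinus (U k) (nk k))
    -- the Čech resolution `0 → F → C¹(F) → ⋯ → C^r(F) → 0`, `C^p(F) = j_{p*} j_p^* F`
    (cech : ∀ F : A, ∃ K : CochainComplex A ℕ,
      (∀ i, K.ExactAt i) ∧ Nonempty (K.X 0 ≅ F) ∧
      (∀ p : Fin r, Nonempty (K.X (p + 1) ≅ (jstar p).obj ((jpull p).obj F))) ∧
      (∀ p : ℕ, r < p → IsZero (K.X p)))
    (n : ℕ) (hn : ∀ k : Fin r, (k : ℕ) + 1 + nk k ≤ n) :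
    AB4StarMinus A n := by
  have (k : Fin r) := (adj k).rightAdjoint_preservesLimits
  have (k : Fin r) :=
    Functor.preservesInjectiveObjects_of_adjunction_of_preservesMonomorphisms (adj k)
  refine ab4StarMinus_of_cech_cover_general r U jstar nk hU (fun F => ?_) n fun k => ?_
  · obtain ⟨K, exact, e, iso, isZero⟩ := cech F
    exact ⟨K, exact, e, fun p => ⟨_, (iso p).map Iso.symm⟩, isZero⟩
  · exact (Nat.add_le_add_right (Nat.le_succ _) _).trans (hn k)
end

section
/- Let 𝒞 be a full abelian subcategory of an abelian category ℳ, both with enough injectives, with the inclusion functor exact. Then 𝒞 is a strong Serre subcategory of ℳ (i.e., Ext^i_𝒞(a,b) → Ext^i_ℳ(a,b) is an isomorphism for all i ≥ 0 and all objects a, b of 𝒞) if and only if the natural functor D⁺(𝒞) → D⁺_𝒞(ℳ) is fully faithful. -/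
/-!
STATEMENT 14 (Proposition 5.3): Let `𝒞` be a full abelian subcategory of an abelian category
`ℳ`, both with enough injectives, with the inclusion functor `F` exact.  Then `𝒞` is a strong
Serre subcategory of `ℳ` (i.e. `Ext^i_𝒞(a,b) → Ext^i_ℳ(a,b)` is bijective for all `i ≥ 0` and
all `a, b` in `𝒞`) if and only if the natural functor `D⁺(𝒞) → D⁺_𝒞(ℳ)` is fully faithful.

`Ext^i(a,b)` is identified with `Hom_{D}(a, b[i])`, and the comparison map with the action of
the derived functor `F.mapDerivedCategory` of the exact inclusion.  Since `D⁺_𝒞(ℳ)` is a full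
subcategory of `D(ℳ)`, full faithfulness of `D⁺(𝒞) → D⁺_𝒞(ℳ)` is expressed as bijectivity of
`F.mapDerivedCategory` on morphisms between bounded below objects of `D(𝒞)`.
-/

open CategoryTheory Limits

universe w w' v u v' u'

/-- An object of the derived category is bounded below (lies in `D⁺`) if its cohomology
vanishes in all sufficiently negative degrees. -/
def IsPlus {C : Type u} [Category.{v} C] [Abelian C] [HasDerivedCategory.{w} C]
    (X : DerivedCategory C) : Prop :=
  ∃ t : ℤ, ∀ k < t, IsZero ((DerivedCategory.homologyFunctor C k).obj X)

/-- `𝒞` is a strong Serre subcategory of `ℳ` via the exact inclusion `F`: for all `a b : 𝒞`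
and `i ≥ 0`, the natural map `Ext^i_𝒞(a,b) → Ext^i_ℳ(a,b)` — identified with the action of
the derived functor of `F` on `Hom_{D(𝒞)}(a, b[i])` — is bijective. -/
def IsStrongSerre {C : Type u} [Category.{v} C] [Abelian C] [HasDerivedCategory.{w} C]
    {M : Type u'} [Category.{v'} M] [Abelian M] [HasDerivedCategory.{w'} M]
    (F : C ⥤ M) [F.Additive] [PreservesFiniteLimits F] [PreservesFiniteColimits F] : Prop :=
  ∀ (a b : C) (i : ℕ),
    Function.Bijective (fun f : ((DerivedCategory.singleFunctor C 0).obj a ⟶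
        ((DerivedCategory.singleFunctor C 0).obj b)⟦(i : ℤ)⟧) => F.mapDerivedCategory.map f)

/-!
A complex of injectives of `C` computes morphisms in `D(C)` already in the homotopy category, and
`F` is fully faithful on homotopy categories. So if `I` is a bounded below complex of injectives
of `C`, the point is that every map from `F X` to `F I` in `D(M)` comes from a unique homotopy
class, although the objects `F Iᵖ` need not be injective in `M`. The strong Serre condition says
that they have no higher extensions from objects of `C`, and this suffices: if `F I ⟶ J` is an
injective resolution, its cone `Z` is acyclic and bounded below, and by induction on the degree
its cycles have no higher extensions from `C` either. Any `K` in `C` is an extension of two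
complexes with zero differential (its cycles, and the quotient by them), and on those a
null-homotopy of a map to `Z` is a choice of lifts along `Zᵖ ⟶ cycles`; hence every map `F K ⟶ Z`
is null-homotopic, and `F I` and `J` receive the same homotopy classes of maps from `F X`.
-/

section Ext

open Abelian

variable {M : Type u'} [Category.{v'} M] [Abelian M] [HasExt.{w'} M]

lemma exists_lift_of_subsingleton_ext_one {S : ShortComplex M} (hS : S.ShortExact) {A : M}
    [Subsingleton (Ext.{w'} A S.X₁ 1)] (f : A ⟶ S.X₃) : ∃ g : A ⟶ S.X₂, g ≫ S.g = f := by
  obtain ⟨x, hx⟩ := Ext.covariant_sequence_exact₃ _ hS (Ext.mk₀ f) (zero_add 1)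
    (Subsingleton.elim _ _)
  obtain ⟨g, rfl⟩ := (Ext.mk₀_bijective _ _).2 x
  exact ⟨g, (Ext.mk₀_bijective _ _).1 (by rw [← hx, Ext.mk₀_comp_mk₀])⟩

lemma exists_extension_of_subsingleton_ext_one {S : ShortComplex M} (hS : S.ShortExact) {W : M}
    [Subsingleton (Ext.{w'} S.X₃ W 1)] (f : S.X₁ ⟶ W) : ∃ g : S.X₂ ⟶ W, S.f ≫ g = f := by
  obtain ⟨x, hx⟩ := Ext.contravariant_sequence_exact₁ hS _ (Ext.mk₀ f) (add_zero 1)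
    (Subsingleton.elim _ _)
  obtain ⟨g, rfl⟩ := (Ext.mk₀_bijective _ _).2 x
  exact ⟨g, (Ext.mk₀_bijective _ _).1 (by rw [← hx, Ext.mk₀_comp_mk₀])⟩

/-- The objects `W` which are acyclic for all functors `Hom(A, -)` with `A` satisfying `P`, i.e.
such that `Ext^i(A, W) = 0` for all `i > 0`; the positive degree is encoded as `n + 1`. -/
def extRightOrthogonal (P : ObjectProperty M) : ObjectProperty M :=
  fun W ↦ ∀ ⦃A : M⦄, P A → ∀ n : ℕ, Subsingleton (Ext.{w'} A W (n + 1))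

variable (P : ObjectProperty M)

lemma extRightOrthogonal_of_injective (W : M) [Injective W] : extRightOrthogonal.{w'} P W :=
  fun _ _ n ↦ Ext.subsingleton_of_injective _ _ n

variable {P}

lemma extRightOrthogonal_X₃ {S : ShortComplex M} (hS : S.ShortExact)
    (h₁ : extRightOrthogonal.{w'} P S.X₁) (h₂ : extRightOrthogonal.{w'} P S.X₂) :
    extRightOrthogonal.{w'} P S.X₃ := by
  refine fun A hA n ↦ subsingleton_of_forall_eq 0 fun e ↦ ?_
  have := h₁ hA (n + 1)
  have := h₂ hA n
  obtain ⟨x, rfl⟩ := Ext.covariant_sequence_exact₃ _ hS e rfl (Subsingleton.elim _ _)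
  rw [Subsingleton.elim x 0, Ext.zero_comp]

lemma extRightOrthogonal_X₂ {S : ShortComplex M} (hS : S.ShortExact)
    (h₁ : extRightOrthogonal.{w'} P S.X₁) (h₃ : extRightOrthogonal.{w'} P S.X₃) :
    extRightOrthogonal.{w'} P S.X₂ := by
  refine fun A hA n ↦ subsingleton_of_forall_eq 0 fun e ↦ ?_
  have := h₁ hA n
  have := h₃ hA n
  obtain ⟨x, rfl⟩ := Ext.covariant_sequence_exact₂ _ hS e (Subsingleton.elim _ _)
  rw [Subsingleton.elim x 0, Ext.zero_comp]

end Ext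

section AcyclicComplexes

variable {M : Type u'} [Category.{v'} M] [Abelian M]

lemma shortExact_iCycles_toCycles {Z : CochainComplex M ℤ} {p q : ℤ} (hpq : p + 1 = q)
    (hZ : Z.ExactAt q) :
    (ShortComplex.mk (Z.iCycles p) (Z.toCycles p q)
      (by rw [← cancel_mono (Z.iCycles q)]; simp)).ShortExact where
  exact := ShortComplex.exact_of_f_is_kernel _ <|
    isKernelOfComp _ _ (Z.cyclesIsKernel p q (by simp [hpq])) _ (Z.toCycles_i p q)
  mono_f := inferInstanceAs (Mono (Z.iCycles p))
  epi_g := Preadditive.epi_of_isZero_cokernel' _ (Z.homologyIsCokernel p q (by simp [← hpq]))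
    hZ.isZero_homology

lemma mappingCone_acyclic {K L : CochainComplex M ℤ} (φ : K ⟶ L) [QuasiIso φ] :
    (CochainComplex.mappingCone φ).Acyclic := by
  rw [← HomotopyCategory.quotient_obj_mem_subcategoryAcyclic_iff_acyclic]
  refine ((HomotopyCategory.subcategoryAcyclic M).trW_iff_of_distinguished _
    (HomotopyCategory.mappingCone_triangleh_distinguished φ)).1 ?_
  rw [← HomotopyCategory.quasiIso_eq_trW_subcategoryAcyclic]
  exact (HomotopyCategory.quotient_map_mem_quasiIso_iff φ).2 ‹_›

lemma extRightOrthogonal_mappingCone_X [HasExt.{w'} M] {P : ObjectProperty M}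
    {K L : CochainComplex M ℤ} (φ : K ⟶ L) (hK : ∀ p, extRightOrthogonal.{w'} P (K.X p))
    (hL : ∀ p, extRightOrthogonal.{w'} P (L.X p)) (p : ℤ) :
    extRightOrthogonal.{w'} P ((CochainComplex.mappingCone φ).X p) :=
  extRightOrthogonal_X₂
    (CochainComplex.mappingCone.triangleRotateShortComplexSplitting φ p).shortExact
    (hL p) (hK (p + 1))

lemma extRightOrthogonal_cycles [HasExt.{w'} M] {P : ObjectProperty M} {Z : CochainComplex M ℤ}
    (n : ℤ) [Z.IsStrictlyGE n] (hZ : Z.Acyclic) (h : ∀ p, extRightOrthogonal.{w'} P (Z.X p))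
    (p : ℤ) : extRightOrthogonal.{w'} P (Z.cycles p) := by
  have of_lt {p : ℤ} (hp : p < n) : extRightOrthogonal.{w'} P (Z.cycles p) :=
    have : Injective (Z.cycles p) :=
      (IsZero.of_mono (Z.iCycles p) (Z.isZero_of_isStrictlyGE n p hp)).injective
    extRightOrthogonal_of_injective P _
  obtain hp | hp := lt_or_ge p n
  · exact of_lt hp
  · induction p, hp using Int.leInduction with
    | base =>
      exact extRightOrthogonal_X₃ (shortExact_iCycles_toCycles (sub_add_cancel n 1) (hZ n))
        (of_lt (by lia)) (h _)
    | succ p _ ih =>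
      exact extRightOrthogonal_X₃ (shortExact_iCycles_toCycles rfl (hZ (p + 1))) ih (h p)

end AcyclicComplexes

section NullHomotopic

open HomologicalComplex Abelian

variable {M : Type u'} [Category.{v'} M] [Abelian M] {Z : CochainComplex M ℤ}

lemma nonempty_homotopy_zero_of_d_eq_zero [HasExt.{w'} M] {X : CochainComplex M ℤ}
    (hX : ∀ p q, X.d p q = 0) (hZ : Z.Acyclic)
    (hXZ : ∀ p q, Subsingleton (Ext.{w'} (X.X p) (Z.cycles q) 1)) (f : X ⟶ Z) :
    Nonempty (Homotopy f 0) := by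
  have hlift (q p : ℤ) (hpq : (ComplexShape.up ℤ).Rel p q) :
      ∃ h : X.X q ⟶ Z.X p, h ≫ Z.d p q = f.f q := by
    obtain ⟨h, hh⟩ := exists_lift_of_subsingleton_ext_one
      (shortExact_iCycles_toCycles hpq (hZ q))
      (Z.liftCycles (f.f q) (q + 1) (by simp) (by rw [f.comm, hX, zero_comp]))
    refine ⟨h, ?_⟩
    rw [← Z.toCycles_i, ← Category.assoc]
    exact (hh =≫ Z.iCycles q).trans (Z.liftCycles_i ..)
  choose h hh using hlift
  refine ⟨(Homotopy.ofEq ?_).trans (Homotopy.nullHomotopy' h)⟩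
  ext q
  have hq : (ComplexShape.up ℤ).Rel (q - 1) q := by simp
  have hq' : (ComplexShape.up ℤ).Rel q (q + 1) := by simp
  rw [Homotopy.nullHomotopicMap'_f hq hq', hX, zero_comp, zero_add, hh]

lemma nonempty_homotopy_zero_of_shortExact [HasExt.{w'} M]
    {S : ShortComplex (CochainComplex M ℤ)} (hS : S.ShortExact)
    (hSZ : ∀ p q, Subsingleton (Ext.{w'} (S.X₃.X p) (Z.X q) 1))
    (h₁ : ∀ f : S.X₁ ⟶ Z, Nonempty (Homotopy f 0))
    (h₃ : ∀ f : S.X₃ ⟶ Z, Nonempty (Homotopy f 0)) (f : S.X₂ ⟶ Z) :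
    Nonempty (Homotopy f 0) := by
  obtain ⟨u⟩ := h₁ (S.f ≫ f)
  have hext (p q : ℤ) : ∃ h : S.X₂.X p ⟶ Z.X q, S.f.f p ≫ h = u.hom p q ∧
      (¬ (ComplexShape.up ℤ).Rel q p → h = 0) := by
    by_cases hqp : (ComplexShape.up ℤ).Rel q p
    · have : Subsingleton (Ext.{w'} (S.map (eval M _ p)).X₃ (Z.X q) 1) := hSZ p q
      obtain ⟨h, hh⟩ := exists_extension_of_subsingleton_ext_one
        (hS.map_of_exact (eval M _ p)) (u.hom p q)
      exact ⟨h, hh, fun hn ↦ (hn hqp).elim⟩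
    · exact ⟨0, by rw [comp_zero, u.zero p q hqp], fun _ ↦ rfl⟩
  choose h hh hh₀ using hext
  have hu : S.f ≫ f = S.f ≫ Homotopy.nullHomotopicMap h := by
    rw [Homotopy.comp_nullHomotopicMap]
    ext p
    simp only [hh]
    exact (u.comm p).trans (add_zero _)
  have := hS.epi_g
  obtain ⟨g, hg⟩ : ∃ g, S.g ≫ g = f - Homotopy.nullHomotopicMap h :=
    ⟨hS.exact.desc _ (by rw [Preadditive.comp_sub, hu, sub_self]), hS.exact.g_desc _ _⟩
  obtain ⟨v⟩ := h₃ g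
  have hf : f = S.g ≫ g + Homotopy.nullHomotopicMap h := by rw [hg, sub_add_cancel]
  exact ⟨(Homotopy.ofEq hf).trans <|
    ((v.compLeft S.g).add (Homotopy.nullHomotopy h hh₀)).trans (Homotopy.ofEq (by simp))⟩

/-- The graded object of cycles of a complex `K`, as a complex with zero differential. -/
noncomputable def cyclesComplex (K : CochainComplex M ℤ) : CochainComplex M ℤ where
  X p := K.cycles p
  d _ _ := 0

/-- The inclusion of the cycles of `K`, as a morphism of complexes. -/
noncomputable def cyclesComplexι (K : CochainComplex M ℤ) : cyclesComplex K ⟶ K where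
  f p := K.iCycles p
  comm' p q _ := (K.iCycles_d p q).trans zero_comp.symm

instance mono_cyclesComplexι (K : CochainComplex M ℤ) : Mono (cyclesComplexι K) :=
  have (p : ℤ) : Mono ((cyclesComplexι K).f p) := inferInstanceAs (Mono (K.iCycles p))
  mono_of_mono_f _ this

lemma shortExact_cyclesComplexι (K : CochainComplex M ℤ) :
    (ShortComplex.mk _ _ (cokernel.condition (cyclesComplexι K))).ShortExact where
  exact := ShortComplex.exact_cokernel _

lemma cokernel_cyclesComplexι_d (K : CochainComplex M ℤ) (p q : ℤ) :
    (cokernel (cyclesComplexι K)).d p q = 0 := by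
  have hπ : K.iCycles q ≫ (cokernel.π (cyclesComplexι K)).f q = 0 :=
    congr_hom (cokernel.condition (cyclesComplexι K)) q
  rw [← cancel_epi ((cokernel.π (cyclesComplexι K)).f p), Hom.comm, ← K.toCycles_i,
    Category.assoc, hπ, comp_zero, comp_zero]

end NullHomotopic

section ExactFunctor

lemma isStableUnderShift_essImage {D E : Type*} [Category* D] [Category* E] [HasShift D ℤ]
    [HasShift E ℤ] (G : D ⥤ E) [G.CommShift ℤ] : G.essImage.IsStableUnderShift ℤ where
  isStableUnderShiftBy n := ⟨fun _ ⟨X, ⟨e⟩⟩ ↦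
    ⟨X⟦n⟧, ⟨(G.commShiftIso n).app X ≪≫ (shiftFunctor E n).mapIso e⟩⟩⟩

variable {C : Type u} [Category.{v} C] [Abelian C] {M : Type u'} [Category.{v'} M] [Abelian M]
  [HasExt.{w'} M] (F : C ⥤ M) [F.Additive] [PreservesFiniteLimits F] [PreservesFiniteColimits F]

lemma nonempty_homotopy_zero_of_acyclic (K : CochainComplex C ℤ) {Z : CochainComplex M ℤ} (n : ℤ)
    [Z.IsStrictlyGE n] (hZ : Z.Acyclic) (h : ∀ p, extRightOrthogonal.{w'} F.essImage (Z.X p))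
    (f : (F.mapHomologicalComplex (.up ℤ)).obj K ⟶ Z) : Nonempty (Homotopy f 0) := by
  have hcycles := extRightOrthogonal_cycles n hZ h
  have of_d_eq_zero (K : CochainComplex C ℤ) (hK : ∀ p q, K.d p q = 0)
      (f : (F.mapHomologicalComplex (.up ℤ)).obj K ⟶ Z) : Nonempty (Homotopy f 0) :=
    nonempty_homotopy_zero_of_d_eq_zero
      (fun p q ↦ (congrArg F.map (hK p q)).trans (F.map_zero _ _)) hZ
      (fun p q ↦ hcycles q (F.obj_mem_essImage _) 0) f
  exact nonempty_homotopy_zero_of_shortExact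
    ((shortExact_cyclesComplexι K).map_of_exact (F.mapHomologicalComplex (.up ℤ)))
    (fun p q ↦ h q (F.obj_mem_essImage _) 0) (of_d_eq_zero _ fun _ _ ↦ rfl)
    (of_d_eq_zero _ (cokernel_cyclesComplexι_d K)) f

lemma rightOrthogonal_essImage_mapHomotopyCategory {Z : CochainComplex M ℤ} (n : ℤ)
    [Z.IsStrictlyGE n] (hZ : Z.Acyclic) (h : ∀ p, extRightOrthogonal.{w'} F.essImage (Z.X p)) :
    (F.mapHomotopyCategory (.up ℤ)).essImage.rightOrthogonal
      ((HomotopyCategory.quotient M (.up ℤ)).obj Z) := by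
  rintro _ f ⟨X, ⟨e⟩⟩
  obtain ⟨K, rfl⟩ := HomotopyCategory.quotient_obj_surjective X
  rw [← cancel_epi e.hom, comp_zero]
  obtain ⟨g, hg⟩ := (HomotopyCategory.quotient _ _).map_surjective
    (X := (F.mapHomologicalComplex (.up ℤ)).obj K) (Y := Z) (e.hom ≫ f)
  obtain ⟨H⟩ := nonempty_homotopy_zero_of_acyclic F K n hZ h g
  exact hg.symm.trans ((HomotopyCategory.eq_of_homotopy g 0 H).trans (Functor.map_zero _ _ _))

lemma bijective_comp_quotient_map (X : HomotopyCategory C (.up ℤ)) {K L : CochainComplex M ℤ}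
    (φ : K ⟶ L) [QuasiIso φ] (n : ℤ) [K.IsStrictlyGE n] [L.IsStrictlyGE n]
    (hK : ∀ p, extRightOrthogonal.{w'} F.essImage (K.X p))
    (hL : ∀ p, extRightOrthogonal.{w'} F.essImage (L.X p)) :
    Function.Bijective fun g : (F.mapHomotopyCategory (.up ℤ)).obj X ⟶
      (HomotopyCategory.quotient M (.up ℤ)).obj K ↦ g ≫ (HomotopyCategory.quotient _ _).map φ := by
  let E := (F.mapHomotopyCategory (.up ℤ)).essImage
  have : E.IsStableUnderShift ℤ := isStableUnderShift_essImage _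
  have : (CochainComplex.mappingCone φ).IsStrictlyGE (n - 1) := by
    rw [CochainComplex.isStrictlyGE_iff]
    intro i hi
    rw [CochainComplex.mappingCone.isZero_X_iff]
    exact ⟨K.isZero_of_isStrictlyGE n _ (by lia), L.isZero_of_isStrictlyGE n _ (by lia)⟩
  have hφ : E.rightOrthogonal.trW ((HomotopyCategory.quotient _ _).map φ) :=
    .mk _ (HomotopyCategory.mappingCone_triangleh_distinguished φ) <|
      rightOrthogonal_essImage_mapHomotopyCategory F (Z := CochainComplex.mappingCone φ) (n - 1)
        (mappingCone_acyclic φ) (extRightOrthogonal_mappingCone_X φ hK hL)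
  have hX : E.rightOrthogonal.trW.isColocal ((F.mapHomotopyCategory (.up ℤ)).obj X) := by
    rw [ObjectProperty.isColocal_trW]
    exact fun _ f hY ↦ hY f (Functor.obj_mem_essImage _ X)
  exact hX _ hφ

lemma bijective_Qh_map [EnoughInjectives M] [HasDerivedCategory.{w} M]
    (X : HomotopyCategory C (.up ℤ)) (K : CochainComplex M ℤ) (n : ℤ) [K.IsStrictlyGE n]
    (hK : ∀ p, extRightOrthogonal.{w'} F.essImage (K.X p)) :
    Function.Bijective fun g : (F.mapHomotopyCategory (.up ℤ)).obj X ⟶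
      (HomotopyCategory.quotient M (.up ℤ)).obj K ↦ DerivedCategory.Qh.map g := by
  obtain ⟨L, φ, _, _, _⟩ :=
    CochainComplex.Plus.modelCategoryQuillen.exists_quasiIso_injective K n
  have := CochainComplex.isKInjective_of_injective L n
  have : IsIso (DerivedCategory.Qh.map ((HomotopyCategory.quotient M (.up ℤ)).map φ)) :=
    Localization.inverts _ (HomotopyCategory.quasiIso M (.up ℤ)) _
      ((HomotopyCategory.quotient_map_mem_quasiIso_iff φ).2 ‹_›)
  have hcomp := (CochainComplex.IsKInjective.Qh_map_bijective
    ((F.mapHomotopyCategory (.up ℤ)).obj X) L).comp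
      (bijective_comp_quotient_map F X φ n hK fun _ ↦ extRightOrthogonal_of_injective _ _)
  refine (Function.Bijective.of_comp_iff' (asIso (DerivedCategory.Qh.map
    ((HomotopyCategory.quotient M (.up ℤ)).map φ))).homToEquiv.bijective _).1 ?_
  convert hcomp using 1
  ext g
  simp [Iso.homToEquiv]

end ExactFunctor

section BoundedBelow

variable {C : Type u} [Category.{v} C] [Abelian C] [HasDerivedCategory.{w} C]

lemma IsPlus.exists_iso_of_enoughInjectives [EnoughInjectives C] {Y : DerivedCategory C}
    (hY : IsPlus Y) :
    ∃ (n : ℤ) (I : CochainComplex C ℤ) (_ : I.IsStrictlyGE n) (_ : ∀ p, Injective (I.X p)),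
      Nonempty (Y ≅ DerivedCategory.Qh.obj ((HomotopyCategory.quotient C (.up ℤ)).obj I)) := by
  obtain ⟨n, hn⟩ := hY
  have : Y.IsGE n := (DerivedCategory.isGE_iff Y n).2 hn
  obtain ⟨K, _, ⟨e⟩⟩ := DerivedCategory.exists_iso_Q_obj_of_isGE Y n
  obtain ⟨I, φ, _, hI, _⟩ :=
    CochainComplex.Plus.modelCategoryQuillen.exists_quasiIso_injective K n
  exact ⟨n, I, ‹_›, hI, ⟨e ≪≫ asIso (DerivedCategory.Q.map φ) ≪≫
    ((DerivedCategory.quotientCompQhIso C).app I).symm⟩⟩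

lemma isPlus_singleFunctor_obj_shift (a : C) (i : ℤ) :
    IsPlus (((DerivedCategory.singleFunctor C 0).obj a)⟦i⟧) :=
  ⟨-i, (DerivedCategory.isGE_iff _ _).1 <|
    DerivedCategory.TStructure.t.isGE_shift _ 0 i (-i) (by simp)⟩

end BoundedBelow

section StrongSerre

open Abelian

lemma bijective_map_of_natIso {D E : Type*} [Category* D] [Category* E] {G H : D ⥤ E} (α : G ≅ H)
    {X Y : D} (h : Function.Bijective fun f : X ⟶ Y ↦ H.map f) :
    Function.Bijective fun f : X ⟶ Y ↦ G.map f := by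
  convert! ((α.app X).homCongr (α.app Y)).symm.bijective.comp h using 1
  ext f
  simp [Iso.homCongr]

lemma bijective_map_of_iso {D E : Type*} [Category* D] [Category* E] (G : D ⥤ E) {X X' Y Y' : D}
    (e : X ≅ X') (e' : Y ≅ Y') (h : Function.Bijective fun f : X' ⟶ Y' ↦ G.map f) :
    Function.Bijective fun f : X ⟶ Y ↦ G.map f := by
  convert ((G.mapIso e).homCongr (G.mapIso e')).symm.bijective.comp
    (h.comp (e.homCongr e').bijective) using 1
  ext f
  simp [Iso.homCongr]

variable {C : Type u} [Category.{v} C] [Abelian C] [HasDerivedCategory.{w} C]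
  {M : Type u'} [Category.{v'} M] [Abelian M] [HasDerivedCategory.{w'} M]
  (F : C ⥤ M) [F.Additive] [PreservesFiniteLimits F] [PreservesFiniteColimits F]

lemma isStrongSerre_iff_bijective_mapExtAddHom [HasExt.{w} C] [HasExt.{w'} M] :
    IsStrongSerre F ↔ ∀ (a b : C) (n : ℕ), Function.Bijective (F.mapExtAddHom a b n) := by
  refine forall₃_congr fun a b n ↦ ?_
  let e := ((F.mapDerivedCategorySingleFunctor 0).app a).homCongr
    ((F.mapDerivedCategory.commShiftIso (n : ℤ)).app ((DerivedCategory.singleFunctor C 0).obj b) ≪≫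
      (shiftFunctor _ (n : ℤ)).mapIso ((F.mapDerivedCategorySingleFunctor 0).app b))
  have hcomp : Ext.homEquiv ∘ F.mapExtAddHom a b n =
      e ∘ (fun f ↦ F.mapDerivedCategory.map f) ∘ Ext.homEquiv := by
    ext x
    exact (Ext.mapExactFunctor_hom F x).trans (by simp [e, ShiftedHom.map, Iso.homCongr])
  rw [← Function.Bijective.of_comp_iff' Ext.homEquiv.bijective, hcomp,
    Function.Bijective.of_comp_iff' e.bijective,
    Function.Bijective.of_comp_iff _ Ext.homEquiv.bijective]

variable {F}

lemma IsStrongSerre.fullyFaithful (h : IsStrongSerre F) : Nonempty F.FullyFaithful := by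
  have : HasExt.{w} C := hasExt_of_hasDerivedCategory C
  have : HasExt.{w'} M := hasExt_of_hasDerivedCategory M
  refine (Functor.FullyFaithful.nonempty_iff_map_bijective F).2 fun a b ↦ ?_
  have h₀ := (isStrongSerre_iff_bijective_mapExtAddHom F).1 h a b 0
  rw [Functor.mapExtAddHom_coe, Ext.mapExactFunctor₀] at h₀
  rwa [Function.Bijective.of_comp_iff' (Equiv.bijective _),
    Function.Bijective.of_comp_iff _ (Equiv.bijective _)] at h₀

lemma IsStrongSerre.extRightOrthogonal_obj_of_injective [HasExt.{w'} M] (h : IsStrongSerre F)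
    (I : C) [Injective I] : extRightOrthogonal.{w'} F.essImage (F.obj I) := by
  have : HasExt.{w} C := hasExt_of_hasDerivedCategory C
  rintro A ⟨a, ⟨e⟩⟩ n
  have : Subsingleton (Ext.{w} a I (n + 1)) := Ext.subsingleton_of_injective a I n
  have := ((isStrongSerre_iff_bijective_mapExtAddHom F).1 h a I (n + 1)).2.subsingleton
  refine subsingleton_of_forall_eq 0 fun x ↦ ?_
  rw [← Ext.mk₀_id_comp x, ← e.inv_hom_id, ← Ext.mk₀_comp_mk₀_assoc,
    Subsingleton.elim ((Ext.mk₀ e.hom).comp x (zero_add _)) 0, Ext.comp_zero]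

lemma IsStrongSerre.bijective_map_quotient_obj_of_injective [EnoughInjectives M]
    (h : IsStrongSerre F) (X : HomotopyCategory C (.up ℤ)) (I : CochainComplex C ℤ) (n : ℤ)
    [I.IsStrictlyGE n] [∀ p, Injective (I.X p)] :
    Function.Bijective fun f : DerivedCategory.Qh.obj X ⟶
      DerivedCategory.Qh.obj ((HomotopyCategory.quotient C (.up ℤ)).obj I) ↦
        F.mapDerivedCategory.map f := by
  have : HasExt.{w'} M := hasExt_of_hasDerivedCategory M
  obtain ⟨hF⟩ := h.fullyFaithful
  have := hF.full
  have := hF.faithful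
  have := CochainComplex.isKInjective_of_injective I n
  have : CochainComplex.IsStrictlyGE ((F.mapHomologicalComplex (.up ℤ)).obj I) n :=
    (CochainComplex.isStrictlyGE_mapHomologicalComplex_obj_iff _ F n).2 ‹_›
  rw [← Function.Bijective.of_comp_iff _ (CochainComplex.IsKInjective.Qh_map_bijective X I)]
  refine bijective_map_of_natIso F.mapDerivedCategoryFactorsh ?_
  exact (bijective_Qh_map F X ((F.mapHomologicalComplex (.up ℤ)).obj I) n
    fun p ↦ h.extRightOrthogonal_obj_of_injective (I.X p)).comp
      ((Functor.FullyFaithful.ofFullyFaithful (F.mapHomotopyCategory (.up ℤ))).map_bijective _ _)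

variable (F)

theorem isStrongSerre_iff_plus_fully_faithful_general [EnoughInjectives C] [EnoughInjectives M] :
    [IsStrongSerre F,
      ∀ X Y : DerivedCategory C, IsPlus X → IsPlus Y →
        Function.Bijective (fun f : X ⟶ Y => F.mapDerivedCategory.map f),
      ∀ X Y : DerivedCategory C, IsPlus Y →
        Function.Bijective (fun f : X ⟶ Y => F.mapDerivedCategory.map f)].TFAE := by
  tfae_have 1 → 3 := fun h X Y hY ↦ by
    obtain ⟨n, I, _, _, ⟨e⟩⟩ := hY.exists_iso_of_enoughInjectives
    exact bijective_map_of_iso _ (DerivedCategory.Qh.objObjPreimageIso X).symm e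
      (h.bijective_map_quotient_obj_of_injective _ I n)
  tfae_have 3 → 2 := fun h X Y _ hY ↦ h X Y hY
  tfae_have 2 → 1 := fun h a b i ↦
    h _ _ ⟨0, (DerivedCategory.isGE_iff _ 0).1 inferInstance⟩ (isPlus_singleFunctor_obj_shift b i)
  tfae_finish

end StrongSerre

theorem isStrongSerre_iff_plus_fully_faithful
    {C : Type u} [Category.{v} C] [Abelian C] [EnoughInjectives C] [HasDerivedCategory.{w} C]
    {M : Type u'} [Category.{v'} M] [Abelian M] [EnoughInjectives M] [HasDerivedCategory.{w'} M]
    (F : C ⥤ M) [F.Additive] [PreservesFiniteLimits F] [PreservesFiniteColimits F]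
    [F.Full] [F.Faithful] :
    IsStrongSerre F ↔
      ∀ X Y : DerivedCategory C, IsPlus X → IsPlus Y →
        Function.Bijective (fun f : X ⟶ Y => F.mapDerivedCategory.map f) :=
  (isStrongSerre_iff_plus_fully_faithful_general F).out 0 1
end

section
/- Let F : 𝒞 → ℳ be an exact fully faithful inclusion of a strong Serre subcategory, where both 𝒞 and ℳ have enough injectives. If F is essentially surjective onto complexes with cohomology in 𝒞 at the level of bounded below derived categories (which follows from 𝒞 having enough injectives), then RF⁺ : D⁺(𝒞) → D⁺_𝒞(ℳ) is an equivalence of categories, with quasi-inverse the restriction of RG⁺, where G is a right adjoint of F. -/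
/-!
STATEMENT 15: Let `F : 𝒞 → ℳ` be an exact fully faithful inclusion of a strong Serre
subcategory, where both `𝒞` and `ℳ` have enough injectives and `F` admits a right adjoint
`G`.  Then `RF⁺ : D⁺(𝒞) → D⁺_𝒞(ℳ)` is an equivalence of categories (with quasi-inverse the
restriction of `RG⁺`).

The equivalence is expressed, for the functor `L = F.mapDerivedCategory` induced on derived
categories by the exact functor `F`, as: `L` is bijective on morphisms between bounded below
objects of `D(𝒞)` (full faithfulness, `D⁺_𝒞(ℳ)` being a full subcategory of `D(ℳ)`), and
every bounded below object of `D(ℳ)` with all cohomology in (the essential image of) `𝒞` is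
isomorphic to `L X` for some bounded below `X` (essential surjectivity onto `D⁺_𝒞(ℳ)`); the
existence of the quasi-inverse, induced by `RG⁺`, follows.
-/

open CategoryTheory Limits

universe w w' v u v' u'

/-!
If `J` is a bounded below complex of injectives of `ℳ`, then `G J` represents `Hom (L -, J)`, where
`L` is the functor `D(𝒞) ⥤ D(ℳ)` induced by `F`: this provides `RG` on `D⁺(ℳ)`, together with a unit
`Y ⟶ RG (L Y)` and a counit `L (RG Y) ⟶ Y`. Dévissage along truncations upgrades the strong Serre
condition to the bijectivity of `L` on morphisms from an object of `𝒞`, placed in any degree, to a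
bounded below complex. Therefore the objects of `𝒞` see the unit and the counit as isomorphisms.
This is enough, because the lowest nonzero cohomology of the cone of either morphism would be a
kernel of a map between objects of `𝒞`, hence itself an object of `𝒞` with no nonzero
endomorphism.
-/

section General

open Pretriangulated

variable {𝒜 ℬ : Type*} [Category* 𝒜] [Category* ℬ]

lemma functor_map_bijective_of_iso (L : 𝒜 ⥤ ℬ) {X Y X' Y' : 𝒜} (e : X ≅ X') (e' : Y ≅ Y')
    (h : Function.Bijective (L.map : (X ⟶ Y) → _)) :
    Function.Bijective (L.map : (X' ⟶ Y') → _) := by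
  convert ((L.mapIso e).homCongr (L.mapIso e')).bijective.comp
    (h.comp (e.homCongr e').symm.bijective) using 1
  ext f
  simp only [Function.comp_apply, Iso.homCongr_symm, Iso.homCongr_apply, Functor.mapIso_hom,
    Functor.mapIso_inv, ← Functor.map_comp, Iso.symm_hom, Iso.symm_inv, Category.assoc,
    Iso.inv_hom_id_assoc, Iso.inv_hom_id, Category.comp_id]

lemma bijective_comp_of_iso {X X' Y Z : 𝒜} (e : X ≅ X') (f : Y ⟶ Z)
    (h : Function.Bijective fun k : X ⟶ Y => k ≫ f) :
    Function.Bijective fun k : X' ⟶ Y => k ≫ f := by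
  convert e.homFromEquiv.bijective.comp (h.comp e.symm.homFromEquiv.bijective) using 1
  ext k
  simp

instance essImage_isClosedUnderKernels [HasZeroMorphisms 𝒜] [HasKernels 𝒜] [HasZeroMorphisms ℬ]
    [HasKernels ℬ] (F : 𝒜 ⥤ ℬ) [F.PreservesZeroMorphisms] [F.Full]
    [∀ {X Y : 𝒜} (f : X ⟶ Y), PreservesLimit (parallelPair f 0) F] :
    F.essImage.IsClosedUnderKernels where
  kernels_le := by
    rintro _ ⟨f, _, hk, ⟨a, ⟨ea⟩⟩, ⟨b, ⟨eb⟩⟩⟩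
    let m : a ⟶ b := F.preimage (ea.hom ≫ f ≫ eb.inv)
    exact ⟨kernel m, ⟨PreservesKernel.iso F m ≪≫
      kernel.mapIso (F.map m) f ea eb (by simp [m]) ≪≫
      (limit.isLimit _).conePointUniqueUpToIso hk⟩⟩

lemma functor_map_bijective_of_shift [HasShift 𝒜 ℤ] [HasShift ℬ ℤ] (L : 𝒜 ⥤ ℬ) [L.CommShift ℤ]
    {X Y : 𝒜} (n : ℤ) (h : Function.Bijective (L.map : (X⟦n⟧ ⟶ Y⟦n⟧) → _)) :
    Function.Bijective (L.map : (X ⟶ Y) → _) := by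
  let e (Z : 𝒜) : L.obj (Z⟦n⟧) ≅ (L.obj Z)⟦n⟧ := (L.commShiftIso n).app Z
  let sh₁ := Functor.FullyFaithful.ofFullyFaithful (shiftFunctor 𝒜 n)
  let sh₂ := Functor.FullyFaithful.ofFullyFaithful (shiftFunctor ℬ n)
  have hL (f : X ⟶ Y) : (L.map f)⟦n⟧' = (e X).inv ≫ L.map (f⟦n⟧') ≫ (e Y).hom := by
    simp [e, Functor.commShiftIso_hom_naturality]
  rw [← Function.Bijective.of_comp_iff' sh₂.homEquiv.bijective]
  exact (funext hL : sh₂.homEquiv ∘ L.map = _) ▸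
    ((e X).homCongr (e Y)).bijective.comp (h.comp sh₁.homEquiv.bijective)

variable [Preadditive 𝒜] [HasZeroObject 𝒜] [HasShift 𝒜 ℤ]
  [∀ n : ℤ, (shiftFunctor 𝒜 n).Additive] [Pretriangulated 𝒜]

lemma eq_zero_of_hom_obj₃ (T : Triangle 𝒜) (hT : T ∈ distTriang 𝒜) {X X' : 𝒜} (e : X'⟦(1 : ℤ)⟧ ≅ X)
    (hs : Function.Surjective fun k : X ⟶ T.obj₁ => k ≫ T.mor₁)
    (hi : Function.Injective fun k : X' ⟶ T.obj₁ => k ≫ T.mor₁)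
    (f : X ⟶ T.obj₃) : f = 0 := by
  have hf : f ≫ T.mor₃ = 0 := by
    obtain ⟨k, hk⟩ := (shiftFunctor 𝒜 (1 : ℤ)).map_surjective (e.hom ≫ f ≫ T.mor₃)
    have hk₁ : k ≫ T.mor₁ = 0 := (shiftFunctor 𝒜 (1 : ℤ)).map_injective <| by
      simp only [Functor.map_comp, hk, Category.assoc, comp_distTriang_mor_zero₃₁ T hT, comp_zero,
        Functor.map_zero]
    have hk₀ : k = 0 := hi (hk₁.trans zero_comp.symm)
    rw [← cancel_epi e.hom, ← hk, hk₀, Functor.map_zero, comp_zero]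
  obtain ⟨g, rfl⟩ := Triangle.coyoneda_exact₃ T hT f hf
  obtain ⟨k, rfl⟩ := hs g
  simp only [Category.assoc, comp_distTriang_mor_zero₁₂ T hT, comp_zero]

variable [Preadditive ℬ] [HasZeroObject ℬ] [HasShift ℬ ℤ]
  [∀ n : ℤ, (shiftFunctor ℬ n).Additive] [Pretriangulated ℬ]
  (L : 𝒜 ⥤ ℬ) [L.CommShift ℤ] [L.IsTriangulated] {X : 𝒜} {T : Triangle 𝒜}

lemma functor_map_injective_obj₂ (hT : T ∈ distTriang 𝒜)
    (h₀ : Function.Surjective (L.map : (X ⟶ T.obj₃⟦(-1 : ℤ)⟧) → _))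
    (h₁ : Function.Injective (L.map : (X ⟶ T.obj₁) → _))
    (h₃ : Function.Injective (L.map : (X ⟶ T.obj₃) → _)) :
    Function.Injective (L.map : (X ⟶ T.obj₂) → _) := by
  refine (injective_iff_map_eq_zero L.mapAddHom).2 fun f (hf : L.map f = 0) => ?_
  have hf₂ : f ≫ T.mor₂ = 0 := h₃ (by rw [Functor.map_comp, hf, zero_comp, Functor.map_zero])
  obtain ⟨g, rfl⟩ := Triangle.coyoneda_exact₂ T hT f hf₂
  have hT' := inv_rot_of_distTriang T hT
  let δ : T.obj₃⟦(-1 : ℤ)⟧ ⟶ T.obj₁ := T.invRotate.mor₁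
  have hδ : δ ≫ T.mor₁ = 0 := comp_distTriang_mor_zero₁₂ _ hT'
  obtain ⟨k, hk⟩ : ∃ k, L.map g = k ≫ L.map δ :=
    Triangle.coyoneda_exact₂ _ (L.map_distinguished _ hT') (L.map g)
      ((L.map_comp g T.mor₁).symm.trans hf)
  obtain ⟨k, rfl⟩ := h₀ k
  have hg : g = k ≫ δ := h₁ (hk.trans (L.map_comp k δ).symm)
  rw [hg, Category.assoc, hδ, comp_zero]

lemma functor_map_surjective_obj₂ (hT : T ∈ distTriang 𝒜)
    (h₁ : Function.Surjective (L.map : (X ⟶ T.obj₁) → _))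
    (h₃ : Function.Surjective (L.map : (X ⟶ T.obj₃) → _))
    (h₄ : Function.Injective (L.map : (X ⟶ T.obj₁⟦(1 : ℤ)⟧) → _)) :
    Function.Surjective (L.map : (X ⟶ T.obj₂) → _) := fun f => by
  obtain ⟨g, hg⟩ := h₃ (f ≫ L.map T.mor₂)
  have hg₃ : g ≫ T.mor₃ = 0 := h₄ <| by
    rw [Functor.map_comp, hg, Category.assoc, ← Functor.map_comp,
      comp_distTriang_mor_zero₂₃ T hT, Functor.map_zero, comp_zero, Functor.map_zero]
  obtain ⟨k, rfl⟩ := Triangle.coyoneda_exact₃ T hT g hg₃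
  have hk : (f - L.map k) ≫ L.map T.mor₂ = 0 := by
    rw [Preadditive.sub_comp, ← hg, Functor.map_comp, sub_self]
  obtain ⟨l, hl⟩ : ∃ l : L.obj X ⟶ L.obj T.obj₁, f - L.map k = l ≫ L.map T.mor₁ :=
    Triangle.coyoneda_exact₂ _ (L.map_distinguished T hT) _ hk
  obtain ⟨l, rfl⟩ := h₁ l
  exact ⟨k + l ≫ T.mor₁, by rw [Functor.map_add, Functor.map_comp, ← hl, add_sub_cancel]⟩

end General

section Representability

variable {K₁ K₂ D₁ D₂ : Type*} [Category* K₁] [Category* K₂] [Category* D₁] [Category* D₂]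
  {Φ : K₁ ⥤ K₂} {Γ : K₂ ⥤ K₁} (adj : Φ ⊣ Γ) (Q₁ : K₁ ⥤ D₁) (Q₂ : K₂ ⥤ D₂) (L : D₁ ⥤ D₂)
  (α : Q₁ ⋙ L ≅ Φ ⋙ Q₂) (J : K₂)

lemma bijective_map_comp_map_counit [Q₁.EssSurj]
    (h₁ : ∀ K, Function.Bijective (Q₁.map : (K ⟶ Γ.obj J) → _))
    (h₂ : ∀ K, Function.Bijective (Q₂.map : (K ⟶ J) → _)) (X : D₁) :
    Function.Bijective fun f : X ⟶ Q₁.obj (Γ.obj J) =>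
      (L.map f ≫ α.hom.app (Γ.obj J) ≫ Q₂.map (adj.counit.app J) : L.obj X ⟶ Q₂.obj J) := by
  let K := Q₁.objPreimage X
  let e : Q₁.obj K ≅ X := Q₁.objObjPreimageIso X
  let c : L.obj X ≅ Q₂.obj (Φ.obj K) := L.mapIso e.symm ≪≫ α.app K
  have hE : Function.Bijective fun ψ : K ⟶ Γ.obj J => e.inv ≫ Q₁.map ψ := by
    simpa [Function.comp_def, Iso.homCongr] using
      (e.homCongr (Iso.refl (Q₁.obj (Γ.obj J)))).bijective.comp (h₁ K)
  have hc : Function.Bijective fun ψ : K ⟶ Γ.obj J =>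
      c.hom ≫ Q₂.map ((adj.homEquiv K J).symm ψ) := by
    simpa [Function.comp_def, Iso.homCongr] using
      (c.symm.homCongr (Iso.refl (Q₂.obj J))).bijective.comp
        ((h₂ (Φ.obj K)).comp (adj.homEquiv K J).symm.bijective)
  refine (Function.Bijective.of_comp_iff _ hE).1 ?_
  convert hc using 1
  funext ψ
  have hα := α.hom.naturality_assoc ψ (Q₂.map (adj.counit.app J))
  dsimp only [Functor.comp_map] at hα
  simp [c, Adjunction.homEquiv_counit, hα]

/-- If `L` is induced along `Q₁` and `Q₂` by a left adjoint `Φ` and the functors `Q₁`, `Q₂` do not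
change the morphisms into `Γ J` and `J`, then `Q₁ (Γ J)` is the value at `Q₂ J` of a partially
defined right adjoint of `L`. -/
noncomputable def representableByOfMapBijective [Q₁.EssSurj]
    (h₁ : ∀ K, Function.Bijective (Q₁.map : (K ⟶ Γ.obj J) → _))
    (h₂ : ∀ K, Function.Bijective (Q₂.map : (K ⟶ J) → _)) :
    (L.op ⋙ yoneda.obj (Q₂.obj J)).RepresentableBy (Q₁.obj (Γ.obj J)) where
  homEquiv {X} := Equiv.ofBijective _ (bijective_map_comp_map_counit adj Q₁ Q₂ L α J h₁ h₂ X)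
  homEquiv_comp f g := by simp

lemma bijective_map_iff_bijective_comp_unit {L : D₁ ⥤ D₂} {Y R : D₁}
    (h : (L.op ⋙ yoneda.obj (L.obj Y)).RepresentableBy R) (X : D₁) :
    Function.Bijective (L.map : (X ⟶ Y) → _) ↔
      Function.Bijective fun k : X ⟶ Y => k ≫ h.homEquiv.symm (𝟙 (L.obj Y)) := by
  rw [← Function.Bijective.of_comp_iff' h.homEquiv.symm.bijective]
  refine iff_of_eq (congrArg _ (funext fun k => ?_))
  simp [h.comp_homEquiv_symm]

lemma bijective_comp_counit {L : D₁ ⥤ D₂} {Y : D₂} {R : D₁}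
    (h : (L.op ⋙ yoneda.obj Y).RepresentableBy R) {X : D₁}
    (hX : Function.Bijective (L.map : (X ⟶ R) → _)) :
    Function.Bijective fun k : L.obj X ⟶ L.obj R => (k ≫ h.homEquiv (𝟙 R) : L.obj X ⟶ Y) := by
  rw [← Function.Bijective.of_comp_iff _ hX]
  have hc : (fun k : L.obj X ⟶ L.obj R => (k ≫ h.homEquiv (𝟙 R) : L.obj X ⟶ Y)) ∘ L.map =
      h.homEquiv := funext fun f => (h.homEquiv_eq f).symm
  exact hc ▸ h.homEquiv.bijective

end Representability

section Homology

variable {V : Type*} [Category* V] [Preadditive V] {W : Type*} [Category* W] [Preadditive W]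
  {F : V ⥤ W} [F.Additive] {G : W ⥤ V} [G.Additive] (adj : F ⊣ G) {ι : Type*} (c : ComplexShape ι)

/-- The adjunction induced on complexes by an adjunction between additive functors. -/
def mapHomologicalComplexAdjunction : F.mapHomologicalComplex c ⊣ G.mapHomologicalComplex c where
  unit := {
    app := fun K => {
      f := fun i => adj.unit.app (K.X i)
      comm' := fun i j _ => (adj.unit.naturality (K.d i j)).symm }
    naturality := fun _ _ φ => HomologicalComplex.hom_ext _ _ fun i => adj.unit.naturality (φ.f i) }
  counit := {
    app := fun K => {
      f := fun i => adj.counit.app (K.X i)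
      comm' := fun i j _ => (adj.counit.naturality (K.d i j)).symm }
    naturality := fun _ _ φ => HomologicalComplex.hom_ext _ _ fun i =>
      adj.counit.naturality (φ.f i) }
  left_triangle_components K := HomologicalComplex.hom_ext _ _ fun i =>
    adj.left_triangle_components (K.X i)
  right_triangle_components K := HomologicalComplex.hom_ext _ _ fun i =>
    adj.right_triangle_components (K.X i)

/-- The adjunction induced on homotopy categories by an adjunction between additive functors. -/
def mapHomotopyCategoryAdjunction : F.mapHomotopyCategory c ⊣ G.mapHomotopyCategory c where
  unit := Quotient.natTransLift _ (Functor.whiskerRight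
    (mapHomologicalComplexAdjunction adj c).unit (HomotopyCategory.quotient V c))
  counit := Quotient.natTransLift _ (Functor.whiskerRight
    (mapHomologicalComplexAdjunction adj c).counit (HomotopyCategory.quotient W c))
  left_triangle_components := fun ⟨K⟩ => congrArg (HomotopyCategory.quotient W c).map
    ((mapHomologicalComplexAdjunction adj c).left_triangle_components K)
  right_triangle_components := fun ⟨K⟩ => congrArg (HomotopyCategory.quotient V c).map
    ((mapHomologicalComplexAdjunction adj c).right_triangle_components K)

variable (G) in
lemma isStrictlyGE_mapHomologicalComplex_obj (K : CochainComplex W ℤ) (t : ℤ) [K.IsStrictlyGE t] :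
    CochainComplex.IsStrictlyGE ((G.mapHomologicalComplex (.up ℤ)).obj K) t :=
  (CochainComplex.isStrictlyGE_iff _ _).2
    fun i hi => G.map_isZero (K.isZero_of_isStrictlyGE t i hi)

end Homology

section IsoCriterion

open DerivedCategory Pretriangulated Triangulated

variable {C : Type u} [Category.{v} C] [Abelian C] [HasDerivedCategory.{w} C]

lemma isPlus_iff (X : DerivedCategory C) : IsPlus X ↔ ∃ t : ℤ, X.IsGE t := by
  simp only [isGE_iff]
  rfl

lemma IsPlus.obj₃ {T : Triangle (DerivedCategory C)} (hT : T ∈ distTriang _)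
    (h₁ : IsPlus T.obj₁) (h₂ : IsPlus T.obj₂) : IsPlus T.obj₃ := by
  obtain ⟨t₁, h₁⟩ := h₁
  obtain ⟨t₂, h₂⟩ := h₂
  exact ⟨min (t₁ - 1) t₂, fun k hk => (HomologySequence.exact₃ _ hT k (k + 1)).isZero_X₂
    ((h₂ k (by lia)).eq_of_src _ _) ((h₁ (k + 1) (by lia)).eq_of_tgt _ _)⟩

lemma exists_distTriang_singleFunctor (X : DerivedCategory C) (t : ℤ) [X.IsGE t] :
    ∃ (a : C) (Y : DerivedCategory C) (_ : Y.IsGE (t + 1)) (f : (singleFunctor C t).obj a ⟶ X)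
      (g : X ⟶ Y) (h : Y ⟶ ((singleFunctor C t).obj a)⟦(1 : ℤ)⟧),
      Triangle.mk f g h ∈ distTriang (DerivedCategory C) := by
  obtain ⟨A, Y, hA, hY, f, g, h, hT⟩ := TStructure.t.exists_triangle X t (t + 1) rfl
  have : A.IsLE t := ⟨hA⟩
  have : Y.IsGE (t + 1) := ⟨hY⟩
  have : A.IsGE t := (isGE_iff _ _).2 fun i hi =>
    (HomologySequence.exact₁ _ hT (i - 1) i).isZero_X₂
      ((Y.isZero_of_isGE (t + 1) (i - 1) (by lia)).eq_of_src _ _)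
      ((X.isZero_of_isGE t i hi).eq_of_tgt _ _)
  obtain ⟨a, ⟨e⟩⟩ := exists_iso_singleFunctor_obj_of_isGE_of_isLE A t
  refine ⟨a, Y, ‹_›, e.inv ≫ f, g, h ≫ e.hom⟦1⟧', isomorphic_distinguished _ hT _ ?_⟩
  have he : (h ≫ e.hom⟦1⟧') ≫ e.inv⟦1⟧' = 𝟙 Y ≫ h := by simp [← Functor.map_comp]
  exact Triangle.isoMk _ _ e.symm (Iso.refl X) (Iso.refl Y) (Category.comp_id (e.inv ≫ f))
    ((Category.comp_id g).trans (Category.id_comp g).symm) he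

lemma exists_homology_map_eq (X : DerivedCategory C) (t : ℤ) [X.IsGE t] {a : C}
    (g : a ⟶ (homologyFunctor C t).obj X) :
    ∃ f : (singleFunctor C t).obj a ⟶ X,
      ((singleFunctorCompHomologyFunctorIso C t).inv.app a ≫
        (homologyFunctor C t).map f :) = g := by
  obtain ⟨b, Y, _, i, p, h, hT⟩ := exists_distTriang_singleFunctor X t
  have : Mono ((homologyFunctor C t).map i) :=
    (HomologySequence.mono_homologyMap_mor₁_iff _ hT (t - 1) t).2
      ((Y.isZero_of_isGE (t + 1) (t - 1) (by lia)).eq_of_src _ _)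
  have : Epi ((homologyFunctor C t).map i) :=
    (HomologySequence.epi_homologyMap_mor₁_iff _ hT t).2
      ((Y.isZero_of_isGE (t + 1) t (by lia)).eq_of_tgt _ _)
  have : IsIso ((homologyFunctor C t).map i) := isIso_of_mono_of_epi _
  let α := singleFunctorCompHomologyFunctorIso C t
  refine ⟨(singleFunctor C t).map (g ≫ inv ((homologyFunctor C t).map i) ≫ α.hom.app b) ≫ i, ?_⟩
  have hα := α.inv.naturality (g ≫ inv ((homologyFunctor C t).map i) ≫ α.hom.app b)
  dsimp only [Functor.comp_map, Functor.id_map] at hα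
  rw [Functor.map_comp, ← reassoc_of% hα]
  simp

lemma isZero_of_isPlus {X : DerivedCategory C} (hX : IsPlus X)
    (h : ∀ t : ℤ, X.IsGE t → IsZero ((homologyFunctor C t).obj X)) : IsZero X := by
  obtain ⟨t, ht⟩ := (isPlus_iff X).1 hX
  have hGE (k : ℕ) : X.IsGE (t + k) := by
    induction k with
    | zero => simpa using ht
    | succ k ih =>
      refine (isGE_iff _ _).2 fun i hi => ?_
      obtain hi | rfl : i < t + k ∨ i = t + k := by push_cast at hi; omega
      · exact X.isZero_of_isGE _ i hi
      · exact h _ ih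
  have hH (n : ℤ) : IsZero ((homologyFunctor C n).obj X) :=
    (isGE_iff _ _).1 (hGE (n + 1 - t).toNat) n (by lia)
  have : IsIso (0 : X ⟶ X) := (isIso_iff _ _).2 fun n =>
    ⟨0, (hH n).eq_of_src _ _, (hH n).eq_of_src _ _⟩
  rwa [isIsoZero_iff_source_target_isZero, and_self] at this

-- The lowest cohomology of the cone of `f` is a kernel of a map between objects of `S`.
lemma isIso_of_bijective_comp_single (S : ObjectProperty C) [S.IsClosedUnderKernels]
    {X Y : DerivedCategory C} (f : X ⟶ Y) (hX : IsPlus X) (hY : IsPlus Y)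
    (hSX : ∀ n, S ((homologyFunctor C n).obj X)) (hSY : ∀ n, S ((homologyFunctor C n).obj Y))
    (h : ∀ a, S a → ∀ n, Function.Bijective
      fun k : (singleFunctor C n).obj a ⟶ X => k ≫ f) : IsIso f := by
  obtain ⟨Z, p, q, hT⟩ := distinguished_cocone_triangle f
  suffices hZ : IsZero Z from (Triangle.isZero₃_iff_isIso₁ _ hT).1 hZ
  refine isZero_of_isPlus (hX.obj₃ hT hY) fun t _ => ?_
  have hom_eq_zero {a : C} (ha : S a) (g : a ⟶ (homologyFunctor C t).obj Z) : g = 0 := by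
    obtain ⟨k, rfl⟩ := exists_homology_map_eq Z t g
    have hk : k = 0 := eq_zero_of_hom_obj₃ _ hT
      (((singleFunctors C).shiftIso 1 t (t + 1) (by lia)).app a)
      (h a ha t).surjective (h a ha (t + 1)).injective k
    rw [hk, Functor.map_zero, comp_zero]
  have hp : (homologyFunctor C t).map p = 0 := hom_eq_zero (hSY t) _
  have := (HomologySequence.exact₃ _ hT t (t + 1) rfl).mono_g hp
  have hker := (HomologySequence.exact₁ _ hT t (t + 1) rfl).fIsKernel
  exact (IsZero.iff_id_eq_zero _).2
    (hom_eq_zero (S.prop_of_isLimit_kernelFork hker (hSX (t + 1)) (hSY (t + 1))) _)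

end IsoCriterion

section DerivedAdjunction

open DerivedCategory

variable {C : Type u} [Category.{v} C] [Abelian C] [HasDerivedCategory.{w} C]
  {M : Type u'} [Category.{v'} M] [Abelian M] [HasDerivedCategory.{w'} M]
  (F : C ⥤ M) [F.Additive] [PreservesFiniteLimits F] [PreservesFiniteColimits F]
  {G : M ⥤ C}

/-- The right derived functor `RG` of a right adjoint `G` of `F` is computed on a bounded below
complex of injectives `J` by `G J`, which represents `Hom (F -, J)`. -/
noncomputable def representableByQhMapHomotopyCategory [G.Additive] (adj : F ⊣ G)
    (J : CochainComplex M ℤ) (t : ℤ) [J.IsStrictlyGE t] [∀ n, Injective (J.X n)] :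
    (F.mapDerivedCategory.op ⋙ yoneda.obj
      (Qh.obj ((HomotopyCategory.quotient M _).obj J))).RepresentableBy
      (Qh.obj ((G.mapHomotopyCategory (.up ℤ)).obj ((HomotopyCategory.quotient M _).obj J))) :=
  let GJ : CochainComplex C ℤ := (G.mapHomologicalComplex (.up ℤ)).obj J
  have : GJ.IsStrictlyGE t := isStrictlyGE_mapHomologicalComplex_obj G J t
  have (n : ℤ) : Injective (GJ.X n) := Injective.injective_of_adjoint adj (J.X n)
  have : GJ.IsKInjective := CochainComplex.isKInjective_of_injective GJ t
  have : J.IsKInjective := CochainComplex.isKInjective_of_injective J t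
  representableByOfMapBijective (mapHomotopyCategoryAdjunction adj (.up ℤ)) Qh Qh
    F.mapDerivedCategory F.mapDerivedCategoryFactorsh _
    (fun K => CochainComplex.IsKInjective.Qh_map_bijective K GJ)
    (fun K => CochainComplex.IsKInjective.Qh_map_bijective K J)

lemma IsPlus.exists_representableBy [EnoughInjectives M] (adj : F ⊣ G) {Y : DerivedCategory M}
    (hY : IsPlus Y) :
    ∃ R, IsPlus R ∧ Nonempty ((F.mapDerivedCategory.op ⋙ yoneda.obj Y).RepresentableBy R) := by
  have : G.Additive := adj.right_adjoint_additive
  obtain ⟨t, _⟩ := (isPlus_iff Y).1 hY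
  obtain ⟨K, _, ⟨e⟩⟩ := exists_iso_Q_obj_of_isGE Y t
  obtain ⟨J, i, _, _, _⟩ := CochainComplex.Plus.modelCategoryQuillen.exists_quasiIso_injective K t
  let eJ : Qh.obj ((HomotopyCategory.quotient M _).obj J) ≅ Y :=
    (quotientCompQhIso M).app J ≪≫ (asIso (Q.map i)).symm ≪≫ e.symm
  let GJ : CochainComplex C ℤ := (G.mapHomologicalComplex (.up ℤ)).obj J
  have : GJ.IsStrictlyGE t := isStrictlyGE_mapHomologicalComplex_obj G J t
  exact ⟨_, (isPlus_iff _).2 ⟨t, TStructure.t.isGE_of_iso ((quotientCompQhIso C).symm.app GJ) t⟩,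
    ⟨(representableByQhMapHomotopyCategory F adj J t).ofIso
      (Functor.isoWhiskerLeft _ (yoneda.mapIso eJ))⟩⟩

end DerivedAdjunction

section StrongSerre

open DerivedCategory Pretriangulated Triangulated

variable {C : Type u} [Category.{v} C] [Abelian C] [HasDerivedCategory.{w} C]
  {M : Type u'} [Category.{v'} M] [Abelian M] [HasDerivedCategory.{w'} M]
  (F : C ⥤ M) [F.Additive] [PreservesFiniteLimits F] [PreservesFiniteColimits F]

lemma nonempty_homology_mapDerivedCategory_iso (X : DerivedCategory C) (k : ℤ) :
    Nonempty ((homologyFunctor M k).obj (F.mapDerivedCategory.obj X) ≅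
      F.obj ((homologyFunctor C k).obj X)) := by
  let K := Q.objPreimage X
  let e : Q.obj K ≅ X := Q.objObjPreimageIso X
  exact ⟨(homologyFunctor M k).mapIso (F.mapDerivedCategory.mapIso e.symm ≪≫
      F.mapDerivedCategoryFactors.app K) ≪≫ (homologyFunctorFactors M k).app _ ≪≫
      (K.sc k).mapHomologyIso F ≪≫ F.mapIso ((homologyFunctorFactors C k).symm.app K ≪≫
        (homologyFunctor C k).mapIso e)⟩

lemma isZero_homology_mapDerivedCategory {X : DerivedCategory C} {k : ℤ}
    (h : IsZero ((homologyFunctor C k).obj X)) :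
    IsZero ((homologyFunctor M k).obj (F.mapDerivedCategory.obj X)) :=
  (F.map_isZero h).of_iso (nonempty_homology_mapDerivedCategory_iso F X k).some

lemma IsPlus.mapDerivedCategory {X : DerivedCategory C} (hX : IsPlus X) :
    IsPlus (F.mapDerivedCategory.obj X) :=
  hX.imp fun _ h k hk => isZero_homology_mapDerivedCategory F (h k hk)

instance isGE_mapDerivedCategory_obj (X : DerivedCategory C) (t : ℤ) [X.IsGE t] :
    (F.mapDerivedCategory.obj X).IsGE t :=
  (isGE_iff _ _).2 fun i hi =>
    isZero_homology_mapDerivedCategory F (X.isZero_of_isGE t i hi)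

instance isLE_mapDerivedCategory_obj (X : DerivedCategory C) (t : ℤ) [X.IsLE t] :
    (F.mapDerivedCategory.obj X).IsLE t :=
  (isLE_iff _ _).2 fun i hi =>
    isZero_homology_mapDerivedCategory F (X.isZero_of_isLE t i hi)

lemma mapDerivedCategory_map_bijective_of_lt (X Y : DerivedCategory C) {n t : ℤ} (h : n < t)
    [X.IsLE n] [Y.IsGE t] :
    Function.Bijective (F.mapDerivedCategory.map : (X ⟶ Y) → _) :=
  ⟨fun f g _ => (TStructure.t.zero f n t).trans (TStructure.t.zero g n t).symm,
    fun f => ⟨0, (F.mapDerivedCategory.map_zero _ _).trans (TStructure.t.zero f n t).symm⟩⟩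

variable {F}

namespace IsStrongSerre

lemma map_bijective_single_single (hF : IsStrongSerre F) (a b : C) (n t : ℤ) :
    Function.Bijective (F.mapDerivedCategory.map :
      ((singleFunctor C n).obj a ⟶ (singleFunctor C t).obj b) → _) := by
  obtain hnt | ⟨i, hi⟩ : n < t ∨ ∃ i : ℕ, (i : ℤ) = n - t :=
    (lt_or_ge n t).imp_right fun h => ⟨(n - t).toNat, by lia⟩
  · exact mapDerivedCategory_map_bijective_of_lt F _ _ hnt
  · exact functor_map_bijective_of_shift _ n <| functor_map_bijective_of_iso _
      (((singleFunctors C).shiftIso n 0 n (by lia)).symm.app a)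
      (((singleFunctors C).shiftIso i (t - n) 0 (by lia)).app b ≪≫
        ((singleFunctors C).shiftIso n (t - n) t (by lia)).symm.app b) (hF a b i)

lemma full (hF : IsStrongSerre F) : F.Full where
  map_surjective {a b} f := by
    let e := F.mapDerivedCategorySingleFunctor 0
    obtain ⟨g, hg⟩ := (hF.map_bijective_single_single a b 0 0).surjective
      (e.hom.app a ≫ (singleFunctor M 0).map f ≫ e.inv.app b)
    obtain ⟨g, rfl⟩ := (singleFunctor C 0).map_surjective g
    have he := e.hom.naturality g
    dsimp only [Functor.comp_map] at he
    refine ⟨g, (singleFunctor M 0).map_injective ?_⟩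
    rw [← cancel_epi (e.hom.app a), ← he, hg]
    simp

lemma map_bijective_single_of_isGE (hF : IsStrongSerre F) (N : ℕ) (a : C) (n t : ℤ)
    (h : n - t < N) (Y : DerivedCategory C) [Y.IsGE t] :
    Function.Bijective (F.mapDerivedCategory.map : ((singleFunctor C n).obj a ⟶ Y) → _) := by
  induction N generalizing t Y with
  | zero => exact mapDerivedCategory_map_bijective_of_lt F _ _ (by simpa using h)
  | succ N ih =>
    obtain ⟨b, Z, _, f, g, k, hT⟩ := exists_distTriang_singleFunctor Y t
    have := TStructure.t.isGE_shift Z (t + 1) (-1) (t + 2)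
    have h₀ := ih (t + 2) (by lia) (Z⟦(-1 : ℤ)⟧)
    have h₁ := hF.map_bijective_single_single a b n t
    have h₃ := ih (t + 1) (by lia) Z
    have h₄ := functor_map_bijective_of_iso _ (Iso.refl _)
      (((singleFunctors C).shiftIso 1 (t - 1) t (by lia)).symm.app b)
      (hF.map_bijective_single_single a b n (t - 1))
    exact ⟨functor_map_injective_obj₂ _ hT h₀.surjective h₁.injective h₃.injective,
      functor_map_surjective_obj₂ _ hT h₁.surjective h₃.surjective h₄.injective⟩

lemma map_bijective_single (hF : IsStrongSerre F) (a : C) (n : ℤ) {Y : DerivedCategory C}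
    (hY : IsPlus Y) :
    Function.Bijective (F.mapDerivedCategory.map : ((singleFunctor C n).obj a ⟶ Y) → _) := by
  obtain ⟨t, _⟩ := (isPlus_iff Y).1 hY
  exact hF.map_bijective_single_of_isGE (n - t + 1).toNat a n t (by lia) Y

lemma isIso_unit (hF : IsStrongSerre F) {Y R : DerivedCategory C} (hY : IsPlus Y) (hR : IsPlus R)
    (h : (F.mapDerivedCategory.op ⋙
      yoneda.obj (F.mapDerivedCategory.obj Y)).RepresentableBy R) :
    IsIso (h.homEquiv.symm (𝟙 (F.mapDerivedCategory.obj Y))) :=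
  isIso_of_bijective_comp_single ⊤ _ hY hR (fun _ => trivial) (fun _ => trivial) fun a _ n =>
    (bijective_map_iff_bijective_comp_unit h _).1 (hF.map_bijective_single a n hY)

lemma isIso_counit (hF : IsStrongSerre F) {Y : DerivedCategory M}
    {R : DerivedCategory C} (hY : IsPlus Y) (hR : IsPlus R)
    (hY' : ∀ k : ℤ, F.essImage ((homologyFunctor M k).obj Y))
    (h : (F.mapDerivedCategory.op ⋙ yoneda.obj Y).RepresentableBy R) :
    IsIso (h.homEquiv (𝟙 R) : F.mapDerivedCategory.obj R ⟶ Y) := by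
  have := hF.full
  refine isIso_of_bijective_comp_single F.essImage _ (hR.mapDerivedCategory F) hY
    (fun k => ⟨_, (nonempty_homology_mapDerivedCategory_iso F R k).map Iso.symm⟩) hY' ?_
  rintro _ ⟨a, ⟨e⟩⟩ n
  let e' : F.mapDerivedCategory.obj ((singleFunctor C n).obj a) ≅ (singleFunctor M n).obj _ :=
    (F.mapDerivedCategorySingleFunctor n).app a ≪≫ (singleFunctor M n).mapIso e
  exact bijective_comp_of_iso e' _ (bijective_comp_counit h (hF.map_bijective_single a n hR))

end IsStrongSerre

end StrongSerre

theorem plus_equivalence_of_strong_serre_general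
    {C : Type u} [Category.{v} C] [Abelian C] [HasDerivedCategory.{w} C]
    {M : Type u'} [Category.{v'} M] [Abelian M] [EnoughInjectives M] [HasDerivedCategory.{w'} M]
    (F : C ⥤ M) [F.Additive] [PreservesFiniteLimits F] [PreservesFiniteColimits F]
    (G : M ⥤ C) (adj : F ⊣ G) (hF : IsStrongSerre F) :
    (∀ X Y : DerivedCategory C, IsPlus Y →
        Function.Bijective (fun f : X ⟶ Y => F.mapDerivedCategory.map f)) ∧
      (∀ Y : DerivedCategory M, IsPlus Y →
        (∀ k : ℤ, F.essImage ((DerivedCategory.homologyFunctor M k).obj Y)) →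
        ∃ X : DerivedCategory C, IsPlus X ∧ Nonempty (F.mapDerivedCategory.obj X ≅ Y)) := by
  refine ⟨fun X Y hY => ?_, fun Y hY hY' => ?_⟩
  · obtain ⟨R, hR, ⟨h⟩⟩ := (hY.mapDerivedCategory F).exists_representableBy F adj
    have := hF.isIso_unit hY hR h
    exact (bijective_map_iff_bijective_comp_unit h X).2 (asIso _).homToEquiv.bijective
  · obtain ⟨R, hR, ⟨h⟩⟩ := hY.exists_representableBy F adj
    have := hF.isIso_counit hY hR hY' h
    exact ⟨R, hR, ⟨asIso (h.homEquiv (𝟙 R) : F.mapDerivedCategory.obj R ⟶ Y)⟩⟩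

theorem plus_equivalence_of_strong_serre
    {C : Type u} [Category.{v} C] [Abelian C] [EnoughInjectives C] [HasDerivedCategory.{w} C]
    {M : Type u'} [Category.{v'} M] [Abelian M] [EnoughInjectives M] [HasDerivedCategory.{w'} M]
    (F : C ⥤ M) [F.Additive] [PreservesFiniteLimits F] [PreservesFiniteColimits F]
    [F.Full] [F.Faithful] (G : M ⥤ C) (adj : F ⊣ G)
    (hF : IsStrongSerre F) :
    (∀ X Y : DerivedCategory C, IsPlus X → IsPlus Y →
        Function.Bijective (fun f : X ⟶ Y => F.mapDerivedCategory.map f)) ∧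
      (∀ Y : DerivedCategory M, IsPlus Y →
        (∀ k : ℤ, F.essImage ((DerivedCategory.homologyFunctor M k).obj Y)) →
        ∃ X : DerivedCategory C, IsPlus X ∧ Nonempty (F.mapDerivedCategory.obj X ≅ Y)) :=
  have h := plus_equivalence_of_strong_serre_general F G adj hF
  ⟨fun X Y _ => h.1 X Y, h.2⟩
end
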